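/- arXiv:0903.5519 — 14 statements merged into one kernel-verified Lean document; each statement's English description precedes it below -/
import Mathlib

section
/- Let d ∈ [−3/4, −1/2] and let x, y be real numbers with 1 ≥ x ≥ y ≥ d−x−y ≥ −d−1. Then the quintuple (1, x, y, d−x−y, −d−1) is symmetrically realizable, i.e., there exists a 5×5 real symmetric matrix with all entries nonnegative (necessarily of trace zero) whose characteristic polynomial is (t−1)(t−x)(t−y)(t−(d−x−y))(t+d+1). -/
open Polynomial Matrix

lemma det_aux (a b r p q t : ℝ) :
    (!![t, -b, -r, -p, -p; -b, t, -r, -p, -p; -r, -r, t, -q, -q; -p, -p, -q, t, -a;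
      -p, -p, -q, -a, t] : Matrix (Fin 5) (Fin 5) ℝ).det =
    (t + a) * (t + b) * ((t - b) * (t * (t - a) - 2 * q ^ 2) - 2 * r ^ 2 * (t - a)
      - 8 * (r * p * q) - 4 * p ^ 2 * t) := by
  simp [Matrix.det_succ_row_zero, Fin.sum_univ_succ, Fin.succAbove]
  ring

theorem stmt_1 (d x y : ℝ) (hd : d ∈ Set.Icc (-3/4 : ℝ) (-1/2 : ℝ))
    (h1 : x ≤ 1) (h2 : y ≤ x) (h3 : d - x - y ≤ y) (h4 : -d - 1 ≤ d - x - y) :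
    ∃ A : Matrix (Fin 5) (Fin 5) ℝ, A.IsSymm ∧ (∀ i j, 0 ≤ A i j) ∧
      A.charpoly =
        (X - C 1) * (X - C x) * (X - C y) * (X - C (d - x - y)) * (X + C (d + 1)) := by
  obtain ⟨hd1, hd2⟩ := hd
  obtain ⟨a, ha⟩ : ∃ a, a = d + 1 := ⟨_, rfl⟩
  obtain ⟨b, hb⟩ : ∃ b, b = -(d - x - y) := ⟨_, rfl⟩
  obtain ⟨c, hc⟩ : ∃ c, c = -y := ⟨_, rfl⟩
  have hx : x = a + b + c - 1 := by linarith
  have ha0 : 0 ≤ a := by linarith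
  have hc0 : 0 ≤ c := by linarith
  have hb0 : 0 ≤ b := by linarith
  have hbc : 0 < b + 2 * c := by linarith
  have hk : 0 ≤ (1 - a) * (a - x) := mul_nonneg (by linarith) (by linarith)
  obtain ⟨k, hkk⟩ : ∃ k, k = (1 - a) * (a - x) := ⟨_, rfl⟩
  rw [← hkk] at hk
  have hR : 0 ≤ c * (b + c) / 2 := by positivity
  have hP : 0 ≤ k * (b + c) / (4 * (b + 2 * c)) := by positivity
  have hQ : 0 ≤ k * c / (2 * (b + 2 * c)) := by positivity
  obtain ⟨r, hr⟩ : ∃ r, r = √(c * (b + c) / 2) := ⟨_, rfl⟩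
  obtain ⟨p, hp⟩ : ∃ p, p = √(k * (b + c) / (4 * (b + 2 * c))) := ⟨_, rfl⟩
  obtain ⟨q, hq⟩ : ∃ q, q = √(k * c / (2 * (b + 2 * c))) := ⟨_, rfl⟩
  have r0 : 0 ≤ r := hr ▸ Real.sqrt_nonneg _
  have p0 : 0 ≤ p := hp ▸ Real.sqrt_nonneg _
  have q0 : 0 ≤ q := hq ▸ Real.sqrt_nonneg _
  have r2 : r ^ 2 = c * (b + c) / 2 := by rw [hr, Real.sq_sqrt hR]
  have p2 : p ^ 2 = k * (b + c) / (4 * (b + 2 * c)) := by rw [hp, Real.sq_sqrt hP]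
  have q2 : q ^ 2 = k * c / (2 * (b + 2 * c)) := by rw [hq, Real.sq_sqrt hQ]
  have rpq : r * p * q = c * (b + c) * k / (4 * (b + 2 * c)) := by
    refine (sq_eq_sq₀ (by positivity) (by positivity)).1 ?_
    rw [mul_pow, mul_pow, r2, p2, q2]
    field_simp
    ring
  refine ⟨!![0, b, r, p, p; b, 0, r, p, p; r, r, 0, q, q; p, p, q, 0, a; p, p, q, a, 0],
    ?_, ?_, ?_⟩
  · ext i j; fin_cases i <;> fin_cases j <;> rfl
  · intro i j; fin_cases i <;> fin_cases j <;> simp <;> assumption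
  · apply Polynomial.funext
    intro t
    rw [Matrix.eval_charpoly]
    have : (Matrix.scalar (Fin 5) t -
        !![0, b, r, p, p; b, 0, r, p, p; r, r, 0, q, q; p, p, q, 0, a; p, p, q, a, 0]) =
        !![t, -b, -r, -p, -p; -b, t, -r, -p, -p; -r, -r, t, -q, -q; -p, -p, -q, t, -a;
          -p, -p, -q, -a, t] := by
      ext i j; fin_cases i <;> fin_cases j <;> simp
    rw [this, det_aux, r2, p2, q2, rpq]
    have e1 : d - x - y = -b := by linarith
    have e2 : y = -c := by linarith
    rw [e1, e2, ← ha, hkk, hx]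
    simp only [eval_mul, eval_sub, eval_add, eval_X, eval_C]
    field_simp
    ring
end

section
/- Let d ∈ [−1/2, −3/4 + (√5)/4] and let x, y be real numbers with 1 ≥ x ≥ y ≥ d−x−y ≥ −d−1. Then the quintuple (1, x, y, d−x−y, −d−1) is symmetrically realizable if and only if x ≤ d + 1. -/
open Polynomial Matrix

lemma nec_small (A : Matrix (Fin 5) (Fin 5) ℝ) (hA : A.IsSymm) (hn : ∀ i j, 0 ≤ A i j)
    (hz : ∀ i, A i i = 0) (v : Fin 5 → ℝ) (m : ℝ) (hm : 0 < m) (hv : A *ᵥ v = m • v)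
    (h1 : (Finset.univ.filter (fun i => 0 < v i)).Nonempty)
    (h2 : (Finset.univ.filter (fun i => 0 < v i)).card ≤ 2) :
    ∃ k l, k ≠ l ∧ m ≤ A k l := by
  have key : ∀ i, m * v i ≤ ∑ j ∈ Finset.univ.filter (fun i => 0 < v i), A i j * v j := by
    intro i
    have h := congrFun hv i
    simp only [mulVec, dotProduct, Pi.smul_apply, smul_eq_mul] at h
    rw [← h, Finset.sum_filter]
    apply Finset.sum_le_sum
    intro j _
    split_ifs with hj
    · exact le_rfl
    · exact mul_nonpos_of_nonneg_of_nonpos (hn i j) (not_lt.mp hj)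
  have hpos : (Finset.univ.filter (fun i => 0 < v i)).card ≠ 0 := by
    rw [Finset.card_ne_zero]; exact h1
  have hc : (Finset.univ.filter (fun i => 0 < v i)).card = 1 ∨
      (Finset.univ.filter (fun i => 0 < v i)).card = 2 := by omega
  rcases hc with hc | hc
  · obtain ⟨i, hi⟩ := Finset.card_eq_one.mp hc
    have hvi : 0 < v i := by
      have : i ∈ Finset.univ.filter (fun i => 0 < v i) := by rw [hi]; simp
      simpa using this
    have := key i
    rw [hi] at this
    simp [hz] at this
    nlinarith [mul_pos hm hvi]
  · obtain ⟨i, j, hij, hi⟩ := Finset.card_eq_two.mp hc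
    have hvi : 0 < v i := by
      have : i ∈ Finset.univ.filter (fun i => 0 < v i) := by rw [hi]; simp
      simpa using this
    have hvj : 0 < v j := by
      have : j ∈ Finset.univ.filter (fun i => 0 < v i) := by rw [hi]; simp
      simpa using this
    have e1 := key i
    have e2 := key j
    rw [hi, Finset.sum_pair hij, hz] at e1 e2
    rw [hA.apply i j] at e2
    refine ⟨i, j, hij, ?_⟩
    by_contra hlt
    push Not at hlt
    nlinarith

lemma nec_alt (A : Matrix (Fin 5) (Fin 5) ℝ) (hA : A.IsSymm) (hn : ∀ i j, 0 ≤ A i j)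
    (hz : ∀ i, A i i = 0) (v : Fin 5 → ℝ) (m : ℝ) (hm : 0 < m) (hv : A *ᵥ v = m • v)
    (h0 : v ≠ 0) :
    (∃ k l, k ≠ l ∧ m ≤ A k l) ∨ ∃ s : ℝ, s ≠ 0 ∧ (∀ i, 0 ≤ s * v i) ∧
      3 ≤ (Finset.univ.filter (fun i => 0 < s * v i)).card := by
  by_contra hcon
  push Not at hcon
  obtain ⟨ha, hb⟩ := hcon
  have gen : ∀ u : Fin 5 → ℝ, A *ᵥ u = m • u →
      (∀ i, u i ≤ 0) ∨ 3 ≤ (Finset.univ.filter (fun i => 0 < u i)).card := by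
    intro u hu
    by_contra hc
    push Not at hc
    obtain ⟨⟨i, hi⟩, hc⟩ := hc
    obtain ⟨k, l, hkl, h⟩ := nec_small A hA hn hz u m hm hu ⟨i, by simpa using hi⟩ (by omega)
    exact absurd h (not_le.mpr (ha k l hkl))
  have hneg : A *ᵥ (-v) = m • (-v) := by rw [mulVec_neg, hv, smul_neg]
  rcases gen v hv with h | h
  · rcases gen (-v) hneg with h' | h'
    · apply h0
      funext i
      have := h i; have := h' i
      simp at *
      linarith
    · have := hb (-1) (by norm_num) (fun i => by have := h i; linarith)
      simp at this h'
      omega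
  · rcases gen (-v) hneg with h' | h'
    · have := hb 1 (by norm_num) (fun i => by have := h' i; simp at this; linarith)
      simp at this
      omega
    · have hd : Disjoint (Finset.univ.filter (fun i => 0 < v i))
          (Finset.univ.filter (fun i => 0 < (-v) i)) := by
        rw [Finset.disjoint_filter]
        intro i _ h1 h2
        simp at h2
        linarith
      have h5 := Finset.card_le_univ
        ((Finset.univ.filter (fun i => 0 < v i)) ∪ (Finset.univ.filter (fun i => 0 < (-v) i)))
      rw [Finset.card_union_of_disjoint hd] at h5
      simp only [Fintype.card_fin] at h5
      omega

lemma nec_pair (A : Matrix (Fin 5) (Fin 5) ℝ) (hA : A.IsSymm) (hn : ∀ i j, 0 ≤ A i j)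
    (hz : ∀ i, A i i = 0) (v w : Fin 5 → ℝ) (m x : ℝ) (hx : 0 < x) (hm : x ≤ m)
    (hv : A *ᵥ v = m • v) (hw : A *ᵥ w = x • w)
    (hv0 : v ≠ 0) (hw0 : w ≠ 0) (ho : v ⬝ᵥ w = 0) :
    ∃ k l, k ≠ l ∧ x ≤ A k l := by
  rcases nec_alt A hA hn hz v m (by linarith) hv hv0 with ⟨k, l, h, h'⟩ | ⟨s, hs, hs1, hs2⟩
  · exact ⟨k, l, h, by linarith⟩
  rcases nec_alt A hA hn hz w x hx hw hw0 with ⟨k, l, h, h'⟩ | ⟨t, ht, ht1, ht2⟩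
  · exact ⟨k, l, h, by linarith⟩
  exfalso
  have hd : ¬ Disjoint (Finset.univ.filter (fun i => 0 < s * v i))
          (Finset.univ.filter (fun i => 0 < t * w i)) := by
    intro hd
    have h5 := Finset.card_le_univ
        ((Finset.univ.filter (fun i => 0 < s * v i)) ∪ (Finset.univ.filter (fun i => 0 < t * w i)))
    rw [Finset.card_union_of_disjoint hd] at h5
    simp only [Fintype.card_fin] at h5
    omega
  rw [Finset.not_disjoint_iff] at hd
  obtain ⟨i, hi1, hi2⟩ := hd
  simp only [Finset.mem_filter, Finset.mem_univ, true_and] at hi1 hi2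
  have hpos : 0 < ∑ j, (s * v j) * (t * w j) :=
    Finset.sum_pos' (fun j _ => mul_nonneg (hs1 j) (ht1 j)) ⟨i, Finset.mem_univ _, mul_pos hi1 hi2⟩
  have : ∑ j, (s * v j) * (t * w j) = s * t * (v ⬝ᵥ w) := by
    simp only [dotProduct, Finset.mul_sum]
    exact Finset.sum_congr rfl (fun j _ => by ring)
  rw [this, ho] at hpos
  simp at hpos

lemma nec_main (d x y : ℝ) (hd : -1/2 ≤ d)
    (h1 : x ≤ 1) (h2 : y ≤ x) (h3 : d - x - y ≤ y) (h4 : -d - 1 ≤ d - x - y)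
    (A : Matrix (Fin 5) (Fin 5) ℝ) (hA : A.IsSymm) (hn : ∀ i j, 0 ≤ A i j)
    (hc : A.charpoly =
          (X - C 1) * (X - C x) * (X - C y) * (X - C (d - x - y)) * (X + C (d + 1))) :
    x ≤ d + 1 := by
  by_contra hlt
  push Not at hlt
  have hH : A.IsHermitian := by
    rw [Matrix.IsHermitian, conjTranspose_eq_transpose_of_trivial]; exact hA
  have hroots : Multiset.map hH.eigenvalues Finset.univ.val =
      {1, x, y, d - x - y, -(d+1)} := by
    have e := hH.roots_charpoly_eq_eigenvalues
    have : A.charpoly = (Multiset.map (fun a => X - C a)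
        ({1, x, y, d - x - y, -(d+1)} : Multiset ℝ)).prod := by
      rw [hc]; simp; ring
    rw [this, Polynomial.roots_multiset_prod_X_sub_C] at e
    rw [e]; rfl
  have htr : A.trace = 0 := by
    rw [hH.trace_eq_sum_eigenvalues]
    have : ∑ i, hH.eigenvalues i = (Multiset.map hH.eigenvalues Finset.univ.val).sum := rfl
    have h2 : ∑ i, hH.eigenvalues i = 0 := by
      rw [this, hroots]; simp; ring
    simpa using h2
  have hz : ∀ i, A i i = 0 := by
    intro i
    have := (Finset.sum_eq_zero_iff_of_nonneg (s := Finset.univ) (f := fun i => A i i)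
      (fun i _ => hn i i)).mp htr i (Finset.mem_univ i)
    exact this
  have hmin : ∀ k l, k ≠ l → A k l ≤ d + 1 := by
    have hM : (A + scalar (Fin 5) (d+1)).IsHermitian := by
      apply hH.add
      rw [Matrix.IsHermitian, conjTranspose_eq_transpose_of_trivial]
      simp [scalar_apply]
    have hP : (A + scalar (Fin 5) (d+1)).PosSemidef := by
      rw [hM.posSemidef_iff_eigenvalues_nonneg]
      intro i
      have hs := hM.eigenvalues_mem_spectrum_real i
      rw [Matrix.mem_spectrum_iff_isRoot_charpoly, IsRoot.def, eval_charpoly] at hs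
      have : scalar (Fin 5) (hM.eigenvalues i) - (A + scalar (Fin 5) (d+1)) =
        scalar (Fin 5) (hM.eigenvalues i - (d+1)) - A := by
        rw [map_sub]; abel
      rw [this, ← eval_charpoly, hc] at hs
      simp only [eval_mul, eval_sub, eval_add, eval_X, eval_C, mul_eq_zero] at hs
      simp only [Pi.zero_apply]
      rcases hs with (((h | h) | h) | h) | h <;> linarith
    intro k l hkl
    have h := hP.dotProduct_mulVec_nonneg (Pi.single k 1 - Pi.single l 1)
    have hs := hA.apply k l
    simp [mulVec_sub, sub_dotProduct, dotProduct_sub, hz, hkl, hkl.symm, scalar_apply,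
      diagonal_apply, add_mulVec] at h
    linarith
  have hi : ∃ i, hH.eigenvalues i = 1 := by
    have : (1:ℝ) ∈ Multiset.map hH.eigenvalues Finset.univ.val := by rw [hroots]; simp
    obtain ⟨i, _, hi⟩ := Multiset.mem_map.mp this
    exact ⟨i, hi⟩
  obtain ⟨i, hi⟩ := hi
  have hj : ∃ j, i ≠ j ∧ hH.eigenvalues j = x := by
    have e : Finset.univ.val = i ::ₘ (Finset.univ.erase i).val := by
      rw [Finset.erase_val, Multiset.cons_erase]; simp
    rw [e, Multiset.map_cons, hi] at hroots
    have e2 := (Multiset.cons_inj_right _).mp hroots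
    have : x ∈ Multiset.map hH.eigenvalues (Finset.univ.erase i).val := by rw [e2]; simp
    rw [Multiset.mem_map] at this
    obtain ⟨j, hj, hj'⟩ := this
    refine ⟨j, ?_, hj'⟩
    have : j ∈ Finset.univ.erase i := hj
    exact fun h => by simp [h] at this
  obtain ⟨j, hij, hj⟩ := hj
  have ev := hH.mulVec_eigenvectorBasis i
  have ew := hH.mulVec_eigenvectorBasis j
  rw [hi] at ev
  rw [hj] at ew
  have ne : ∀ i, (WithLp.ofLp (hH.eigenvectorBasis i)) ≠ 0 := by
    intro i h
    have := hH.eigenvectorBasis.orthonormal.ne_zero i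
    apply this
    ext k
    exact congrFun h k
  have ho := hH.eigenvectorBasis.orthonormal.2 hij.symm
  obtain ⟨k, l, hkl, h⟩ := nec_pair A hA hn hz _ _ 1 x (by linarith) h1 ev ew (ne i) (ne j) (by
    beta_reduce at ho
    rw [EuclideanSpace.inner_eq_star_dotProduct] at ho
    simpa using ho)
  have := hmin k l hkl
  linarith

lemma suf_mat (d w p q c e s δ a b : ℝ) (hc : 0 ≤ c) (he : 0 ≤ e) (ha : 0 ≤ a) (hb : 0 ≤ b)
    (hs1 : δ ≤ s) (hs2 : -δ ≤ s) (e0 : w + p + q = d)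
    (e1 : c + e = d + 1 - w) (e2 : c * e - δ^2 = -(d+1)*w)
    (e3 : c * e - s^2 - a^2 - b^2 = d - w + p * q)
    (e4 : a^2 * e + b^2 * c - 2 * a * b * s = - (p * q)) :
    ∃ A : Matrix (Fin 5) (Fin 5) ℝ, A.IsSymm ∧ (∀ i j, 0 ≤ A i j) ∧
        A.charpoly =
          (X - C 1) * (X - C w) * (X - C p) * (X - C q) * (X + C (d + 1)) := by
  obtain ⟨r, hr, hr2⟩ : ∃ r : ℝ, 0 ≤ r ∧ r^2 = 1/2 :=
    ⟨Real.sqrt (1/2), Real.sqrt_nonneg _, Real.sq_sqrt (by norm_num)⟩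
  obtain ⟨α, hα⟩ : ∃ α, α = r * a := ⟨_, rfl⟩
  obtain ⟨β, hβ⟩ : ∃ β, β = r * b := ⟨_, rfl⟩
  obtain ⟨f, hf⟩ : ∃ f, f = (s + δ)/2 := ⟨_, rfl⟩
  obtain ⟨g, hg⟩ : ∃ g, g = (s - δ)/2 := ⟨_, rfl⟩
  have hα0 : 0 ≤ α := hα ▸ mul_nonneg hr ha
  have hβ0 : 0 ≤ β := hβ ▸ mul_nonneg hr hb
  have hf0 : 0 ≤ f := by linarith
  have hg0 : 0 ≤ g := by linarith
  refine ⟨!![0, α, α, β, β; α, 0, c, f, g; α, c, 0, g, f; β, f, g, 0, e; β, g, f, e, 0],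
    ?_, ?_, ?_⟩
  · ext i j
    fin_cases i <;> fin_cases j <;> rfl
  · intro i j
    fin_cases i <;> fin_cases j <;> simp <;> assumption
  · apply Polynomial.funext
    intro t
    rw [eval_charpoly]
    have hdet : (scalar (Fin 5) t - !![0, α, α, β, β; α, 0, c, f, g; α, c, 0, g, f; β, f, g, 0, e; β, g, f, e, 0]).det = (t^2 + (c+e)*t + (c*e-(f-g)^2)) *
        (t^3 - (c+e)*t^2 + (c*e-(f+g)^2-2*α^2-2*β^2)*t + (2*α^2*e+2*β^2*c-4*α*β*(f+g))) := by
      have : scalar (Fin 5) t - !![0, α, α, β, β; α, 0, c, f, g; α, c, 0, g, f; β, f, g, 0, e; β, g, f, e, 0]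
        = !![t, -α, -α, -β, -β; -α, t, -c, -f, -g; -α, -c, t, -g, -f; -β, -f, -g, t, -e; -β, -g, -f, -e, t] := by
        ext i j
        fin_cases i <;> fin_cases j <;> simp [scalar_apply]
      rw [this]
      simp [det_succ_row_zero, Fin.sum_univ_succ, Fin.succAbove, submatrix]
      ring
    have q1 : f - g = δ := by rw [hf, hg]; ring
    have q2 : f + g = s := by rw [hf, hg]; ring
    have q3 : 2 * α^2 = a^2 := by rw [hα, mul_pow, hr2]; ring
    have q4 : 2 * β^2 = b^2 := by rw [hβ, mul_pow, hr2]; ring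
    have q5 : 4 * α * β = 2 * a * b := by
      rw [hα, hβ]; linear_combination (4 * a * b) * hr2
    rw [hdet, q1, q2, q3, q4, q5, e1, e2, e3, e4]
    simp only [eval_mul, eval_sub, eval_add, eval_X, eval_C]
    subst e0
    ring

lemma conv_lem (m M v : ℝ) (h1 : m ≤ v) (h2 : v ≤ M) :
    ∃ θ : ℝ, 0 ≤ θ ∧ θ ≤ 1 ∧ v = θ * M + (1 - θ) * m := by
  rcases eq_or_lt_of_le (h1.trans h2) with h | h
  · exact ⟨0, le_rfl, zero_le_one, by linarith⟩
  · have : 0 < M - m := by linarith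
    refine ⟨(v - m)/(M - m), div_nonneg (by linarith) this.le, ?_, ?_⟩
    · rw [div_le_one this]; linarith
    · field_simp; ring

set_option maxHeartbeats 1600000 in
lemma suf_main (d x y z : ℝ) (hd : -1/2 ≤ d) (hd0 : d < 0) (hd' : 2*d^2+3*d+1/2 ≤ 0)
    (hz : x + y + z = d) (h2 : y ≤ x) (h3 : z ≤ y) (h4 : -d - 1 ≤ z) (hx : x ≤ d + 1) :
    ∃ w p q c e s δ a b : ℝ, (w = x ∧ p = y ∧ q = z ∨ w = y ∧ p = x ∧ q = z) ∧
    0 ≤ c ∧ 0 ≤ e ∧ 0 ≤ a ∧ 0 ≤ b ∧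
    δ ≤ s ∧ -δ ≤ s ∧ w + p + q = d ∧
    c + e = d + 1 - w ∧ c * e - δ^2 = -(d+1)*w ∧
    c * e - s^2 - a^2 - b^2 = d - w + p * q ∧
    a^2 * e + b^2 * c - 2 * a * b * s = - (p * q) := by
  have hy : -1/2 ≤ y := by linarith
  have hxd : d / 3 ≤ x := by linarith
  have hzz : z ≤ 0 := by linarith
  rcases le_total x 0 with hx0 | hx0
  · have r1 : 0 ≤ -z := by linarith
    have r2 : 0 ≤ z - d := by linarith
    have r3 : 0 ≤ 1 + z + x := by linarith
    have r4 : 0 < 1 + z - y := by linarith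
    have hs := Real.sq_sqrt (mul_nonneg r2 r3)
    have hsn := Real.sqrt_nonneg ((z - d) * (1 + z + x))
    set s := Real.sqrt ((z - d) * (1 + z + x)) with hsd
    obtain ⟨k, hk⟩ : ∃ k, k = -z / (1 + z - y) := ⟨_, rfl⟩
    have hk0 : 0 ≤ k := hk ▸ div_nonneg r1 r4.le
    have hk1 : k * (1 + z - y) = -z := by rw [hk]; field_simp
    have ea := Real.sq_sqrt (mul_nonneg hk0 r2)
    have eb := Real.sq_sqrt (mul_nonneg hk0 r3)
    have eab : Real.sqrt (k * (z - d)) * Real.sqrt (k * (1 + z + x)) = k * s := by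
      rw [← Real.sqrt_mul (mul_nonneg hk0 r2), hsd, ← Real.sqrt_sq hk0,
        ← Real.sqrt_mul (sq_nonneg _), Real.sqrt_sq hk0]
      congr 1; ring
    refine ⟨x, y, z, -x, d + 1, s, 0, Real.sqrt (k * (z - d)), Real.sqrt (k * (1 + z + x)),
      Or.inl ⟨rfl, rfl, rfl⟩, by linarith, by linarith, Real.sqrt_nonneg _, Real.sqrt_nonneg _,
      hsn, by linarith, hz, by ring, by ring, ?_, ?_⟩
    · rw [ea, eb, hs]
      subst hz
      linear_combination (-1) * hk1
    · rw [ea, eb]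
      have : 2 * Real.sqrt (k * (z - d)) * Real.sqrt (k * (1 + z + x)) * s = 2 * k * s^2 := by
        linear_combination (2 * s) * eab
      rw [this, hs]
      subst hz
      linear_combination (y) * hk1
  · obtain ⟨N, hN⟩ : ∃ N, N = -d*(1+y) - x*z := ⟨_, rfl⟩
    have hN0 : 0 ≤ N := by
      rw [hN]; nlinarith
    have hsN := Real.sq_sqrt hN0
    have hsn := Real.sqrt_nonneg N
    rcases le_total y 0 with hy0 | hy0
    · rcases le_total (x + y) 0 with hxy | hxy
      · have c1 : - (x * z) ≤ -y * N := by
          have : 0 ≤ (1 + y) * (-(x+y)) * (x - d) :=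
            mul_nonneg (mul_nonneg (by linarith) (by linarith)) (by linarith)
          rw [hN]; subst hz; nlinarith
        have hiv := intermediate_value_Icc' (f := fun s : ℝ => (N - s^2) * (d + 1 - y - 2 * s) / 2)
          hsn (by fun_prop)
        have hm : -(x*z) ∈ Set.Icc ((N - (Real.sqrt N)^2) * (d + 1 - y - 2 * (Real.sqrt N)) / 2)
            ((N - 0^2) * (d + 1 - y - 2 * 0) / 2) := by
          constructor
          · rw [hsN]; simp; nlinarith
          · nlinarith
        obtain ⟨s, ⟨hs0, hs1⟩, hs2⟩ := hiv hm
        simp only at hs2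
        have hs3 : 0 ≤ (N - s^2)/2 := by nlinarith
        have ea := Real.sq_sqrt hs3
        refine ⟨y, x, z, -y, d + 1, s, 0, Real.sqrt ((N - s^2)/2), Real.sqrt ((N - s^2)/2),
          Or.inr ⟨rfl, rfl, rfl⟩, by linarith, by linarith, Real.sqrt_nonneg _,
          Real.sqrt_nonneg _, hs0, by linarith, by linarith, by ring, by ring, ?_, ?_⟩
        · rw [ea, hN]; ring
        · linear_combination hs2 + (d + 1 - y - 2 * s) * ea
      · have c1 : -y * N ≤ - (x * z) := by
          have : 0 ≤ (1 + y) * (x+y) * (x - d) :=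
            mul_nonneg (mul_nonneg (by linarith) (by linarith)) (by linarith)
          rw [hN]; subst hz; nlinarith
        have c2 : - (x * z) ≤ (d+1) * N := by
          have : 0 ≤ (-d) * ((d + 1 - x) * (x + 1 + y)) :=
            mul_nonneg (by linarith) (mul_nonneg (by linarith) (by linarith))
          rw [hN]; subst hz; nlinarith
        obtain ⟨θ, t0, t1, ht⟩ := conv_lem _ _ _ c1 c2
        have ea := Real.sq_sqrt (mul_nonneg t0 hN0)
        have eb := Real.sq_sqrt (mul_nonneg (sub_nonneg.mpr t1) hN0)
        refine ⟨y, x, z, -y, d + 1, 0, 0, Real.sqrt (θ * N), Real.sqrt ((1 - θ) * N),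
          Or.inr ⟨rfl, rfl, rfl⟩, by linarith, by linarith, Real.sqrt_nonneg _,
          Real.sqrt_nonneg _, le_rfl, by linarith, by linarith, by ring, by ring, ?_, ?_⟩
        · rw [ea, eb, hN]; ring
        · rw [ea, eb, ht]; ring
    · have hdy : 0 ≤ (d + 1) * y := mul_nonneg (by linarith) hy0
      have es := Real.sq_sqrt hdy
      have hsp := Real.sqrt_nonneg ((d+1)*y)
      set s := Real.sqrt ((d+1)*y)
      have hyd : 0 ≤ d + 1 - y := by linarith
      have c2 : - (x * z) ≤ (d + 1 - y) * N := by
        have k1 : x * (x + y - d) ≤ (2*d+1-y) * (d + 1) :=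
          mul_le_mul (by linarith) (by linarith) (by linarith) (by linarith)
        have k2 : x * (x + y - d) * (y - d) ≤ (2*d+1-y) * (d + 1) * (y - d) :=
          mul_le_mul_of_nonneg_right k1 (by linarith)
        have k3 : 0 ≤ (2*d+1) * y^2 - (2*d+1)^2 * y + 2*d^2*(d+1) := by
          have k4 : 0 ≤ (2*d+1) * (y - (2*d+1)/2)^2 :=
            mul_nonneg (by linarith) (sq_nonneg _)
          have k5 : 0 ≤ 2*d^2*(d+1) - (2*d+1)^3/4 := by
            nlinarith
          nlinarith
        have k6 : z = d - x - y := by linarith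
        rw [hN, k6]
        nlinarith
      have hiv := intermediate_value_Icc
          (f := fun a : ℝ => a^2 * (d + 1 - y) - 2 * a * Real.sqrt (N - a^2) * s)
          hsn (by fun_prop)
      have hm : -(x*z) ∈ Set.Icc ((0:ℝ)^2 * (d + 1 - y) - 2 * 0 * Real.sqrt (N - 0^2) * s)
            ((Real.sqrt N)^2 * (d + 1 - y) - 2 * (Real.sqrt N) * Real.sqrt (N - (Real.sqrt N)^2) * s) := by
        constructor
        · nlinarith
        · rw [hsN]; simp; linarith
      obtain ⟨a, ⟨ha0, ha1⟩, ha2⟩ := hiv hm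
      simp only at ha2
      have ha3 : 0 ≤ N - a^2 := by nlinarith
      have eb := Real.sq_sqrt ha3
      refine ⟨y, x, z, 0, d + 1 - y, s, s, a, Real.sqrt (N - a^2),
          Or.inr ⟨rfl, rfl, rfl⟩, le_rfl, hyd, ha0,
          Real.sqrt_nonneg _, le_rfl, by linarith, by linarith, by ring, ?_, ?_, ?_⟩
      · rw [es]; ring
      · rw [eb, es, hN]; ring
      · linear_combination ha2

theorem stmt_2 (d x y : ℝ) (hd : d ∈ Set.Icc (-1/2 : ℝ) (-3/4 + Real.sqrt 5 / 4))
    (h1 : x ≤ 1) (h2 : y ≤ x) (h3 : d - x - y ≤ y) (h4 : -d - 1 ≤ d - x - y) :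
    (∃ A : Matrix (Fin 5) (Fin 5) ℝ, A.IsSymm ∧ (∀ i j, 0 ≤ A i j) ∧
        A.charpoly =
          (X - C 1) * (X - C x) * (X - C y) * (X - C (d - x - y)) * (X + C (d + 1))) ↔
      x ≤ d + 1 := by
  obtain ⟨hd1, hd2⟩ := hd
  constructor
  · rintro ⟨A, hA, hn, hc⟩
    exact nec_main d x y hd1 h1 h2 h3 h4 A hA hn hc
  · intro hx
    have h5 : Real.sqrt 5 ^ 2 = 5 := Real.sq_sqrt (by norm_num)
    have h5n := Real.sqrt_nonneg 5
    have hd0 : d < 0 := by nlinarith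
    have hd' : 2*d^2+3*d+1/2 ≤ 0 := by nlinarith
    obtain ⟨w, p, q, c, e, s, δ, a, b, hw, hc, he, ha, hb, hs1, hs2, e0, e1, e2, e3, e4⟩ :=
      suf_main d x y (d - x - y) hd1 hd0 hd' (by ring) h2 h3 h4 hx
    obtain ⟨A, hA, hn, hch⟩ := suf_mat d w p q c e s δ a b hc he ha hb hs1 hs2 e0 e1 e2 e3 e4
    refine ⟨A, hA, hn, ?_⟩
    rw [hch]
    rcases hw with ⟨rfl, rfl, rfl⟩ | ⟨rfl, rfl, rfl⟩
    · rfl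
    · ring
end

section
/- Let d ∈ [−3/4 + (√5)/4, 0] and let x, y be real numbers with 1 ≥ x ≥ y ≥ d−x−y ≥ −d−1. Then the quintuple (1, x, y, d−x−y, −d−1) is symmetrically realizable if and only if x ≤ d + 1 and s₃(x,y,d) ≥ 0. -/
open Polynomial Matrix

def symMat (p q r s t w : ℝ) : Matrix (Fin 5) (Fin 5) ℝ :=
  !![0, p, p, q, q; p, 0, r, t, w; p, r, 0, w, t; q, t, w, 0, s; q, w, t, s, 0]

lemma symMat_eval (p q r s t w u : ℝ) : (symMat p q r s t w).charpoly.eval u =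
    (u^2 + (r+s)*u + (r*s-(t-w)^2)) * (u^3 - (r+s)*u^2 + (r*s-(t+w)^2-2*p^2-2*q^2)*u
      - (-2*p^2*s-2*q^2*r+4*p*q*(t+w))) := by
  rw [Matrix.eval_charpoly]
  have h : (Matrix.scalar (Fin 5) u - symMat p q r s t w) =
      !![u, -p, -p, -q, -q; -p, u, -r, -t, -w; -p, -r, u, -w, -t; -q, -t, -w, u, -s;
        -q, -w, -t, -s, u] := by
    ext i j
    fin_cases i <;> fin_cases j <;> simp [symMat]
  rw [h]
  simp [Matrix.det_succ_row_zero, Fin.sum_univ_succ, Fin.succAbove]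
  ring

lemma symMat_real (p q r s t w x y z e : ℝ) (hp : 0 ≤ p) (hq : 0 ≤ q) (hr : 0 ≤ r) (hs : 0 ≤ s)
    (ht : 0 ≤ t) (hw : 0 ≤ w) (a1 : r + s = e - y) (a2 : r*s-(t-w)^2 = -(y*e))
    (b1 : r + s = 1 + x + z) (b2 : r*s-(t+w)^2-2*p^2-2*q^2 = x + z + x * z)
    (b3 : -2*p^2*s-2*q^2*r+4*p*q*(t+w) = x * z) :
    ∃ A : Matrix (Fin 5) (Fin 5) ℝ, A.IsSymm ∧ (∀ i j, 0 ≤ A i j) ∧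
        A.charpoly = (X - C 1) * (X - C x) * (X - C y) * (X - C z) * (X + C e) := by
  refine ⟨symMat p q r s t w, ?_, ?_, ?_⟩
  · ext i j
    fin_cases i <;> fin_cases j <;> simp [symMat]
  · intro i j
    fin_cases i <;> fin_cases j <;> simp [symMat, *]
  · apply Polynomial.funext
    intro u
    rw [symMat_eval, a2, b2, b3]
    simp only [eval_mul, eval_sub, eval_add, eval_X, eval_C]
    have h1 : u^3 - (r+s)*u^2 = u^3 - (1+x+z)*u^2 := by rw [b1]
    rw [h1, a1]
    ring

lemma suff_pos (d x y : ℝ) (hd : -1/4 ≤ d) (hd0 : d ≤ 0) (hy : 0 < y) (h2 : y ≤ x)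
    (h4 : -d - 1 ≤ d - x - y)
    (h : 0 ≤ 1 + x ^ 3 + y ^ 3 + (d - x - y) ^ 3 + (-d - 1) ^ 3) :
    ∃ A : Matrix (Fin 5) (Fin 5) ℝ, A.IsSymm ∧ (∀ i j, 0 ≤ A i j) ∧
        A.charpoly = (X - C 1) * (X - C x) * (X - C y) * (X - C (d-x-y)) * (X + C (d+1)) := by
  obtain ⟨z, hz⟩ : ∃ z, z = d - x - y := ⟨_, rfl⟩
  rw [← hz] at h h4 ⊢
  have hσ : 0 < d + 1 - y := by linarith
  have hx : 0 < x := by linarith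
  have hz0 : z < 0 := by linarith
  have hxz : x * z < 0 := by nlinarith
  obtain ⟨K, hK⟩ : ∃ K, K = -(y*(d+1)) - x - z - x*z := ⟨_, rfl⟩
  have hs3 : 0 ≤ K * (d+1-y) + x*z := by
    have : 1 + x ^ 3 + y ^ 3 + z ^ 3 + (-d - 1) ^ 3 = 3 * (K * (d+1-y) + x*z) := by
      subst hK hz; ring
    linarith
  have hKp : 0 < K := by
    by_contra hc
    nlinarith
  have hsK : (-(x*z)/K) * K = -(x*z) := by field_simp
  obtain ⟨s, hs⟩ : ∃ s, s = -(x*z)/K := ⟨_, rfl⟩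
  rw [← hs] at hsK
  have hs0 : 0 ≤ s := by rw [hs]; apply div_nonneg <;> linarith
  have hr0 : 0 ≤ d + 1 - y - s := by
    by_contra hc
    nlinarith
  have ht : 0 ≤ (d+1-y-s)*s + y*(d+1) := by
    have := mul_nonneg hr0 hs0
    have : 0 ≤ y*(d+1) := mul_nonneg hy.le (by linarith)
    linarith
  have hp := Real.sq_sqrt (show 0 ≤ K/2 by linarith)
  have htt := Real.sq_sqrt ht
  refine symMat_real (√(K/2)) 0 (d+1-y-s) s (√((d+1-y-s)*s + y*(d+1))) 0 x y z (d+1)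
    (Real.sqrt_nonneg _) le_rfl hr0 hs0 (Real.sqrt_nonneg _) le_rfl ?_ ?_ ?_ ?_ ?_
  · ring
  · rw [sub_zero, htt]; ring
  · rw [hz]; ring
  · rw [add_zero, htt, hp, hK]; ring
  · rw [hp]; linarith

lemma suff_neg (d x y : ℝ) (hd : -1/4 ≤ d) (hd0 : d ≤ 0) (hy : y ≤ 0) (h2 : y ≤ x)
    (h3 : d - x - y ≤ y) (hxd : x ≤ d + 1) :
    ∃ A : Matrix (Fin 5) (Fin 5) ℝ, A.IsSymm ∧ (∀ i j, 0 ≤ A i j) ∧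
        A.charpoly = (X - C 1) * (X - C x) * (X - C y) * (X - C (d-x-y)) * (X + C (d+1)) := by
  obtain ⟨z, hz⟩ : ∃ z, z = d - x - y := ⟨_, rfl⟩
  rw [← hz] at h3 ⊢
  have hb : 0 ≤ x - d := by linarith
  have hz0 : 0 ≤ -z/2 := by linarith
  have hρ : 0 ≤ (x-d)*(d+1) - x := by nlinarith
  have hbz : 0 ≤ x - d - z := by linarith
  have hc0 : 0 ≤ ((x-d)*(d+1) - x)/(x-d-z) := div_nonneg hρ hbz
  have hc : ((x-d)*(d+1) - x)/(x-d-z) * (x-d-z) = (x-d)*(d+1) - x := by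
    rcases hbz.eq_or_lt with h | h
    · have : z = 0 := by linarith
      have : x = d := by linarith
      have : d = 0 := by linarith
      have hx0 : x = 0 := by linarith
      rw [← h, mul_zero, hx0]; subst this; ring
    · field_simp
  obtain ⟨c, hcd⟩ : ∃ c, c = ((x-d)*(d+1) - x)/(x-d-z) := ⟨_, rfl⟩
  rw [← hcd] at hc hc0
  obtain ⟨k, hk0, hk⟩ : ∃ k, 0 ≤ k ∧ k^2 = c := ⟨_, Real.sqrt_nonneg _, Real.sq_sqrt hc0⟩
  obtain ⟨m, hm0, hm⟩ : ∃ m, 0 ≤ m ∧ m^2 = x-d := ⟨_, Real.sqrt_nonneg _, Real.sq_sqrt hb⟩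
  obtain ⟨n, hn0, hn⟩ : ∃ n, 0 ≤ n ∧ n^2 = -z/2 := ⟨_, Real.sqrt_nonneg _, Real.sq_sqrt hz0⟩
  have hy' : y = d - x - z := by linarith
  refine symMat_real (n*m) (k*n) (-y) (d+1) (k*m/2) (k*m/2) x y z (d+1)
    (by positivity) (by positivity) (by linarith) (by linarith) (by positivity) (by positivity)
    ?_ ?_ ?_ ?_ ?_
  · ring
  · ring
  · rw [hz]; ring
  · have : -y * (d + 1) - (k * m / 2 + k * m / 2) ^ 2 - 2 * (n * m) ^ 2 - 2 * (k * n) ^ 2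
      = -y * (d+1) - k^2*m^2 - 2*n^2*m^2 - 2*k^2*n^2 := by ring
    rw [this, hk, hm, hn, hy']
    linear_combination -hc
  · have : -2 * (n * m) ^ 2 * (d + 1) - 2 * (k * n) ^ 2 * -y
        + 4 * (n * m) * (k * n) * (k * m / 2 + k * m / 2)
      = -2*n^2*m^2*(d+1) + 2*k^2*n^2*y + 4*n^2*m^2*k^2 := by ring
    rw [this, hk, hm, hn, hy']
    linear_combination (-z)*hc

/-- key estimate: an eigenvector with one or two positive entries -/
lemma key2 (A : Matrix (Fin 5) (Fin 5) ℝ) (hA : A.IsSymm) (hn : ∀ i j, 0 ≤ A i j)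
    (hdg : ∀ i, A i i = 0) (v : Fin 5 → ℝ) (l : ℝ) (hl : 0 < l) (hv : A *ᵥ v = l • v)
    (i j : Fin 5) (hij : i ≠ j) (hi : 0 < v i) (hk : ∀ k, k ≠ i → k ≠ j → v k ≤ 0) :
    l ≤ A i j := by
  have hrow : ∀ a b : Fin 5, a ≠ b → (∀ k, k ≠ a → k ≠ b → v k ≤ 0) → l * v a ≤ A a b * v b := by
    intro a b hab hk
    have h := congrFun hv a
    simp only [Matrix.mulVec, dotProduct, Pi.smul_apply, smul_eq_mul] at h
    rw [← h, ← Finset.add_sum_erase _ _ (Finset.mem_univ b)]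
    have : ∑ k ∈ Finset.univ.erase b, A a k * v k ≤ 0 := by
      apply Finset.sum_nonpos
      intro k hkm
      by_cases hka : k = a
      · subst hka; simp [hdg]
      · exact mul_nonpos_of_nonneg_of_nonpos (hn _ _) (hk k hka (Finset.ne_of_mem_erase hkm))
    linarith
  have e1 := hrow i j hij hk
  have e2 := hrow j i hij.symm (fun k h1 h2 => hk k h2 h1)
  have hs : A j i = A i j := hA.apply i j
  rw [hs] at e2
  have ha := hn i j
  have hvj : 0 < v j := by
    by_contra hc
    nlinarith [mul_pos hl hi]
  by_contra hc
  nlinarith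

/-- at most two positive entries -/
def SmallPos (v : Fin 5 → ℝ) : Prop :=
  ∃ i j, i ≠ j ∧ 0 < v i ∧ ∀ k, k ≠ i → k ≠ j → v k ≤ 0

lemma small_of_card (v : Fin 5 → ℝ) (hc : (Finset.univ.filter (fun i => 0 < v i)).card ≤ 2)
    (hne : ∃ i, 0 < v i) : SmallPos v := by
  classical
  obtain ⟨i, hi⟩ := hne
  by_cases h : ∃ j, j ≠ i ∧ 0 < v j
  · obtain ⟨j, hji, hj⟩ := h
    refine ⟨i, j, hji.symm, hi, fun k h1 h2 => ?_⟩
    by_contra hk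
    push Not at hk
    have : ({i, j, k} : Finset (Fin 5)) ⊆ Finset.univ.filter (fun i => 0 < v i) := by
      intro a ha
      simp at ha
      rcases ha with rfl | rfl | rfl <;> simp [*]
    have h3 := Finset.card_le_card this
    rw [Finset.card_eq_three.2 ⟨i, j, k, hji.symm, h1.symm, h2.symm, rfl⟩] at h3
    omega
  · push Not at h
    obtain ⟨j, hj⟩ := exists_ne i
    exact ⟨i, j, hj.symm, hi, fun k h1 _ => h k h1⟩

lemma disj_card (f g : Fin 5 → Prop) [DecidablePred f] [DecidablePred g]
    (h : ∀ i, f i → g i → False) :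
    (Finset.univ.filter f).card ≤ 2 ∨ (Finset.univ.filter g).card ≤ 2 := by
  have hd : Disjoint (Finset.univ.filter f) (Finset.univ.filter g) := by
    rw [Finset.disjoint_filter]
    intro i _ h1 h2
    exact h i h1 h2
  have := Finset.card_le_univ (Finset.univ.filter f ∪ Finset.univ.filter g)
  rw [Finset.card_union_of_disjoint hd] at this
  simp at this
  omega

lemma sign_split (v : Fin 5 → ℝ) (hv : v ≠ 0) :
    SmallPos v ∨ SmallPos (-v) ∨ ∃ e : ℝ, e ≠ 0 ∧ (∀ i, 0 ≤ e * v i) ∧ (e = 1 ∨ e = -1) := by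
  by_cases hp : ∃ i, 0 < v i
  · by_cases hm : ∃ i, 0 < (-v) i
    · rcases disj_card (fun i => 0 < v i) (fun i => 0 < (-v) i)
        (fun i a b => by simp at b; linarith) with h | h
      · exact Or.inl (small_of_card v h hp)
      · exact Or.inr (Or.inl (small_of_card _ h hm))
    · push Not at hm
      refine Or.inr (Or.inr ⟨1, one_ne_zero, fun i => ?_, Or.inl rfl⟩)
      have := hm i
      simp at this
      linarith
  · push Not at hp
    refine Or.inr (Or.inr ⟨-1, by norm_num, fun i => ?_, Or.inr rfl⟩)
    have := hp i
    linarith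

lemma two_vec (u v : Fin 5 → ℝ) (hu : u ≠ 0) (hv : v ≠ 0) (h : u ⬝ᵥ v = 0) :
    SmallPos u ∨ SmallPos (-u) ∨ SmallPos v ∨ SmallPos (-v) := by
  rcases sign_split u hu with h1 | h1 | ⟨e, he, h1, he'⟩
  · exact Or.inl h1
  · exact Or.inr (Or.inl h1)
  rcases sign_split v hv with h2 | h2 | ⟨f, hf, h2, hf'⟩
  · exact Or.inr (Or.inr (Or.inl h2))
  · exact Or.inr (Or.inr (Or.inr h2))
  have hz : ∀ i, (e * u i) * (f * v i) = 0 := by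
    have hs : ∑ i, (e * u i) * (f * v i) = 0 := by
      have : ∑ i, (e * u i) * (f * v i) = e * f * (u ⬝ᵥ v) := by
        rw [dotProduct, Finset.mul_sum]
        exact Finset.sum_congr rfl (fun i _ => by ring)
      rw [this, h, mul_zero]
    intro i
    exact (Finset.sum_eq_zero_iff_of_nonneg
      (fun i _ => mul_nonneg (h1 i) (h2 i))).1 hs i (Finset.mem_univ i)
  have hup : ∃ i, 0 < e * u i := by
    obtain ⟨i, hi⟩ := Function.ne_iff.1 hu
    exact ⟨i, lt_of_le_of_ne (h1 i) (mul_ne_zero he hi).symm⟩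
  have hvp : ∃ i, 0 < f * v i := by
    obtain ⟨i, hi⟩ := Function.ne_iff.1 hv
    exact ⟨i, lt_of_le_of_ne (h2 i) (mul_ne_zero hf hi).symm⟩
  rcases disj_card (fun i => 0 < e * u i) (fun i => 0 < f * v i)
    (fun i a b => (mul_pos a b).ne' (hz i)) with hc | hc
  · have := small_of_card (fun i => e * u i) hc hup
    rcases he' with rfl | rfl
    · left; simpa using this
    · right; left
      convert this using 1
      ext i; simp
  · have := small_of_card (fun i => f * v i) hc hvp
    rcases hf' with rfl | rfl
    · right; right; left; simpa using this
    · right; right; right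
      convert this using 1
      ext i; simp

lemma key3 (A : Matrix (Fin 5) (Fin 5) ℝ) (hA : A.IsSymm) (hn : ∀ i j, 0 ≤ A i j)
    (hdg : ∀ i, A i i = 0) (v : Fin 5 → ℝ) (l : ℝ) (hl : 0 < l) (hv : A *ᵥ v = l • v)
    (hs : SmallPos v ∨ SmallPos (-v)) : ∃ i j, i ≠ j ∧ l ≤ A i j := by
  rcases hs with ⟨i, j, hij, hi, hk⟩ | ⟨i, j, hij, hi, hk⟩
  · exact ⟨i, j, hij, key2 A hA hn hdg v l hl hv i j hij hi hk⟩
  · refine ⟨i, j, hij, key2 A hA hn hdg (-v) l hl ?_ i j hij hi hk⟩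
    rw [Matrix.mulVec_neg, hv, smul_neg]

lemma necess (A : Matrix (Fin 5) (Fin 5) ℝ) (hA : A.IsSymm) (hn : ∀ i j, 0 ≤ A i j)
    (x y z e : ℝ) (hsum : 1 + x + y + z - e = 0) (hx1 : x ≤ 1) (he : 0 ≤ e) (hxe : -e ≤ x)
    (hye : -e ≤ y) (hze : -e ≤ z)
    (hc : A.charpoly = (X - C 1) * (X - C x) * (X - C y) * (X - C z) * (X + C e)) :
    x ≤ e ∧ 0 ≤ 1 + x^3 + y^3 + z^3 + (-e)^3 := by
  have hH : A.IsHermitian := by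
    rw [Matrix.IsHermitian, Matrix.conjTranspose_eq_transpose_of_trivial]; exact hA
  have hroots : A.charpoly.roots = {1, x, y, z, -e} := by
    have : A.charpoly = (({1, x, y, z, -e} : Multiset ℝ).map (fun a => X - C a)).prod := by
      rw [hc]; simp; ring
    rw [this, Polynomial.roots_multiset_prod_X_sub_C]
  have hev : Multiset.map hH.eigenvalues Finset.univ.val = ({1, x, y, z, -e} : Multiset ℝ) := by
    rw [← hroots, hH.roots_charpoly_eq_eigenvalues]
    simp
  have hpow : ∀ k : ℕ, (A^k).trace = 1 + x^k + y^k + z^k + (-e)^k := by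
    intro k
    have h1 : A^k = Unitary.conjStarAlgAut ℝ _ hH.eigenvectorUnitary
        (diagonal (fun i => hH.eigenvalues i ^ k)) := by
      conv_lhs => rw [hH.spectral_theorem]
      rw [← map_pow, Matrix.diagonal_pow]
      rfl
    have h2 : (A^k).trace = ∑ i, hH.eigenvalues i ^ k := by
      rw [h1, Unitary.conjStarAlgAut_apply, Matrix.trace_mul_cycle]
      simp
    have h3 := congrArg (fun m => (Multiset.map (fun a => a^k) m).sum) hev
    simp only [Multiset.map_map] at h3
    rw [h2]
    refine h3.trans ?_
    simp
    ring
  have htr : A.trace = 0 := by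
    have := hpow 1
    simp at this
    rw [this]; linarith
  have hdg : ∀ i, A i i = 0 := by
    intro i
    exact (Finset.sum_eq_zero_iff_of_nonneg (fun i _ => hn i i)).1 htr i (Finset.mem_univ i)
  constructor
  · by_contra hlt
    push Not at hlt
    have hx : 0 < x := by linarith
    have hbd : ∀ i j, i ≠ j → A i j ≤ e := by
      intro i j hij
      have hall : ∀ i, 0 ≤ hH.eigenvalues i + e := by
        intro i
        have : hH.eigenvalues i ∈ ({1, x, y, z, -e} : Multiset ℝ) := by
          rw [← hev]; exact Multiset.mem_map_of_mem _ (Finset.mem_univ i)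
        simp at this
        rcases this with h | h | h | h | h <;> rw [h] <;> linarith
      have h1 : A + e • (1 : Matrix (Fin 5) (Fin 5) ℝ) =
          Unitary.conjStarAlgAut ℝ _ hH.eigenvectorUnitary
            (diagonal (fun i => hH.eigenvalues i + e)) := by
        conv_lhs => rw [hH.spectral_theorem]
        have : diagonal (fun i => hH.eigenvalues i + e) =
          diagonal (fun i => hH.eigenvalues i) + e • (1 : Matrix (Fin 5) (Fin 5) ℝ) := by
          ext a b
          by_cases hab : a = b
          · subst hab; simp
          · simp [hab]
        rw [this, map_add, map_smul, map_one]
        rfl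
      have hps : (A + e • (1 : Matrix (Fin 5) (Fin 5) ℝ)).PosSemidef := by
        rw [h1, Unitary.conjStarAlgAut_apply]
        exact (Matrix.PosSemidef.diagonal hall).mul_mul_conjTranspose_same _
      have hq := hps.dotProduct_mulVec_nonneg (Pi.single i 1 - Pi.single j 1)
      have hsy : A j i = A i j := hA.apply i j
      simp [Matrix.mulVec_sub, sub_dotProduct, dotProduct_sub, Matrix.add_mulVec,
        Matrix.smul_mulVec, hdg, hij, hij.symm, hsy] at hq
      linarith
    obtain ⟨i, j, hij, h1, h2⟩ :
        ∃ i j, i ≠ j ∧ hH.eigenvalues i = 1 ∧ hH.eigenvalues j = x := by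
      obtain ⟨i, hi, h1, h2⟩ := (Multiset.map_eq_cons _ _ _ _).2 hev
      have hx' : x ∈ Multiset.map hH.eigenvalues (Finset.univ.val.erase i) := by
        rw [h2]; simp
      obtain ⟨j, hj, hjx⟩ := Multiset.mem_map.1 hx'
      refine ⟨i, j, ?_, h1, hjx⟩
      rintro rfl
      exact (Multiset.Nodup.notMem_erase Finset.univ.nodup) hj
    have hu : ∀ k, (hH.eigenvectorBasis k).ofLp ≠ 0 := by
      intro k hk
      apply hH.eigenvectorBasis.orthonormal.ne_zero k
      ext a
      exact congrFun hk a
    have hor : (hH.eigenvectorBasis i).ofLp ⬝ᵥ (hH.eigenvectorBasis j).ofLp = 0 := by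
      have := hH.eigenvectorBasis.orthonormal.2 hij.symm
      simpa [EuclideanSpace.inner_eq_star_dotProduct] using this
    have hi := hH.mulVec_eigenvectorBasis i
    have hj := hH.mulVec_eigenvectorBasis j
    rw [h1] at hi
    rw [h2] at hj
    have hfin : ∃ a b, a ≠ b ∧ x ≤ A a b := by
      rcases two_vec _ _ (hu i) (hu j) hor with h | h | h | h
      · obtain ⟨a, b, hab, h⟩ := key3 A hA hn hdg _ 1 one_pos hi (Or.inl h)
        exact ⟨a, b, hab, hx1.trans h⟩
      · obtain ⟨a, b, hab, h⟩ := key3 A hA hn hdg _ 1 one_pos hi (Or.inr h)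
        exact ⟨a, b, hab, hx1.trans h⟩
      · exact key3 A hA hn hdg _ x hx hj (Or.inl h)
      · exact key3 A hA hn hdg _ x hx hj (Or.inr h)
    obtain ⟨a, b, hab, h⟩ := hfin
    linarith [hbd a b hab]
  · rw [← hpow 3]
    apply Finset.sum_nonneg
    intro i _
    simp only [pow_succ, pow_zero, one_mul, Matrix.diag_apply, Matrix.mul_apply]
    exact Finset.sum_nonneg fun k _ => mul_nonneg (Finset.sum_nonneg fun l _ =>
      mul_nonneg (hn _ _) (hn _ _)) (hn _ _)

theorem stmt_3 (d x y : ℝ) (hd : d ∈ Set.Icc (-3/4 + Real.sqrt 5 / 4) (0 : ℝ))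
    (h1 : x ≤ 1) (h2 : y ≤ x) (h3 : d - x - y ≤ y) (h4 : -d - 1 ≤ d - x - y) :
    (∃ A : Matrix (Fin 5) (Fin 5) ℝ, A.IsSymm ∧ (∀ i j, 0 ≤ A i j) ∧
        A.charpoly =
          (X - C 1) * (X - C x) * (X - C y) * (X - C (d - x - y)) * (X + C (d + 1))) ↔
      (x ≤ d + 1 ∧ 0 ≤ 1 + x ^ 3 + y ^ 3 + (d - x - y) ^ 3 + (-d - 1) ^ 3) := by
  obtain ⟨hd1, hd0⟩ := hd
  have h5 : (2:ℝ) ≤ √5 := Real.le_sqrt_of_sq_le (by norm_num)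
  have hd' : -1/4 ≤ d := by linarith
  constructor
  · rintro ⟨A, hA, hn, hc⟩
    have := necess A hA hn x y (d-x-y) (d+1) (by ring) h1 (by linarith) (by linarith)
      (by linarith) (by linarith) hc
    rwa [neg_add', ] at this
  · rintro ⟨hx, hs⟩
    rcases le_or_gt y 0 with hy | hy
    · exact suff_neg d x y hd' hd0 hy h2 h3 hx
    · exact suff_pos d x y hd' hd0 hy h2 h4 hs
end

section
/- Let A be a 5×5 real symmetric matrix with all entries nonnegative, and let λ₁ ≥ λ₂ ≥ λ₃ ≥ λ₄ ≥ λ₅ be its eigenvalues (counted with multiplicity, in decreasing order). Then λ₂ + λ₅ ≤ trace(A). -/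
open Polynomial Matrix

theorem half_ray (A : Matrix (Fin 5) (Fin 5) ℝ) (hnn : ∀ i j, 0 ≤ A i j) (x : Fin 5 → ℝ) (m : ℝ)
    (hx : A *ᵥ x = m • x) :
    m * ∑ i, (max (x i) 0)^2 ≤ ∑ i, ∑ j, max (x i) 0 * A i j * max (x j) 0 := by
  have key : ∀ i, m * (max (x i) 0)^2 ≤ ∑ j, max (x i) 0 * A i j * max (x j) 0 := by
    intro i
    have h1 : ∑ j, A i j * x j = m * x i := by
      have := congrFun hx i
      simpa [mulVec, dotProduct] using this
    have h2 : m * (max (x i) 0)^2 = max (x i) 0 * (m * x i) := by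
      rcases le_total (x i) 0 with h | h
      · simp [max_eq_right h]
      · simp only [max_eq_left h]; ring
    rw [h2, ← h1, Finset.mul_sum]
    apply Finset.sum_le_sum
    intro j _
    rw [← mul_assoc]
    apply mul_le_mul_of_nonneg_left (le_max_left _ _)
    exact mul_nonneg (le_max_right _ _) (hnn _ _)
  rw [Finset.mul_sum]
  exact Finset.sum_le_sum (fun i _ => key i)

theorem pair_supp (p q : Fin 5 → ℝ) (h : ∀ i, p i * q i = 0) :
    (∃ i j, i ≠ j ∧ ∀ k, k ≠ i → k ≠ j → p k = 0) ∨ 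
    (∃ i j, i ≠ j ∧ ∀ k, k ≠ i → k ≠ j → q k = 0) := by
  classical
  have gen : ∀ S : Finset (Fin 5), S.card ≤ 2 → ∃ i j, i ≠ j ∧ ∀ k, k ≠ i → k ≠ j → k ∉ S := by
    decide
  let S := Finset.univ.filter (fun i => p i ≠ 0)
  let T := Finset.univ.filter (fun i => q i ≠ 0)
  have hd : Disjoint S T := by
    rw [Finset.disjoint_left]
    intro i hi hj
    simp only [S, T, Finset.mem_filter, Finset.mem_univ, true_and] at hi hj
    exact (mul_ne_zero hi hj) (h i)
  have hc : S.card + T.card ≤ 5 := by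
    rw [← Finset.card_union_of_disjoint hd]
    exact (Finset.card_le_univ _).trans (by simp)
  rcases (by omega : S.card ≤ 2 ∨ T.card ≤ 2) with hs | hs
  · left
    obtain ⟨i, j, hij, hk⟩ := gen S hs
    refine ⟨i, j, hij, fun k h1 h2 => ?_⟩
    simpa [S] using hk k h1 h2
  · right
    obtain ⟨i, j, hij, hk⟩ := gen T hs
    refine ⟨i, j, hij, fun k h1 h2 => ?_⟩
    simpa [T] using hk k h1 h2

theorem sum_pair (i j : Fin 5) (hij : i ≠ j) (f : Fin 5 → ℝ) (h : ∀ k, k ≠ i → k ≠ j → f k = 0) :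
    ∑ k, f k = f i + f j := by
  rw [← Finset.sum_pair hij]
  symm
  apply Finset.sum_subset (Finset.subset_univ _)
  intro k _ hk
  simp at hk
  exact h k hk.1 hk.2

theorem sum_pair2 (A : Matrix (Fin 5) (Fin 5) ℝ) (i j : Fin 5) (hij : i ≠ j) (f : Fin 5 → ℝ)
    (h : ∀ k, k ≠ i → k ≠ j → f k = 0) :
    ∑ k, ∑ m, f k * A k m * f m =
      f i * A i i * f i + f i * A i j * f j + (f j * A j i * f i + f j * A j j * f j) := by
  rw [sum_pair i j hij _ (by intro k h1 h2; simp [h k h1 h2])]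
  rw [sum_pair i j hij _ (by intro k h1 h2; simp [h k h1 h2])]
  rw [sum_pair i j hij _ (by intro k h1 h2; simp [h k h1 h2])]

theorem fin_step (A : Matrix (Fin 5) (Fin 5) ℝ) (hsym : A.IsSymm) (hnn : ∀ i j, 0 ≤ A i j)
    (a b : ℝ) (hb : ∀ z : Fin 5 → ℝ, b * ∑ i, (z i)^2 ≤ ∑ i, ∑ j, z i * A i j * z j)
    (p : Fin 5 → ℝ) (hp : p ≠ 0) (ha : a * ∑ i, (p i)^2 ≤ ∑ i, ∑ j, p i * A i j * p j)
    (i j : Fin 5) (hij : i ≠ j) (h : ∀ k, k ≠ i → k ≠ j → p k = 0) : a + b ≤ A.trace := by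
  classical
  have htr : A i i + A j j ≤ A.trace := by
    rw [← Finset.sum_pair (f := fun i => A i i) hij]
    exact Finset.sum_le_sum_of_subset_of_nonneg (Finset.subset_univ _) (fun k _ _ => hnn k k)
  have hs : A j i = A i j := hsym.apply i j
  rw [sum_pair2 A i j hij p h, sum_pair i j hij _ (by intro k h1 h2; simp [h k h1 h2])] at ha
  have hz := hb (fun k => if k = i then p j else if k = j then - p i else 0)
  have hz0 : ∀ k, k ≠ i → k ≠ j → (fun k => if k = i then p j else if k = j then - p i else 0) k = 0 := by
    intro k h1 h2; simp [h1, h2]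
  rw [sum_pair2 A i j hij _ hz0, sum_pair i j hij _ (by intro k h1 h2; simp [h1, h2])] at hz
  simp only [if_true, hij.symm, if_false] at hz
  rw [hs] at ha hz
  have hpos : 0 < (p i)^2 + (p j)^2 := by
    by_contra hc
    apply hp
    have h1 : p i = 0 := by nlinarith [sq_nonneg (p i), sq_nonneg (p j)]
    have h2 : p j = 0 := by nlinarith [sq_nonneg (p i), sq_nonneg (p j)]
    funext k
    by_cases hki : k = i
    · rw [hki, h1]; rfl
    by_cases hkj : k = j
    · rw [hkj, h2]; rfl
    exact h k hki hkj
  have : (a + b) * ((p i)^2 + (p j)^2) ≤ (A i i + A j j) * ((p i)^2 + (p j)^2) := by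
    nlinarith
  exact (le_of_mul_le_mul_right this hpos).trans htr

theorem fin_step2 (A : Matrix (Fin 5) (Fin 5) ℝ) (hsym : A.IsSymm) (hnn : ∀ i j, 0 ≤ A i j)
    (a b : ℝ) (hb : ∀ z : Fin 5 → ℝ, b * ∑ i, (z i)^2 ≤ ∑ i, ∑ j, z i * A i j * z j)
    (p : Fin 5 → ℝ) (hp : p ≠ 0) (ha : a * ∑ i, (p i)^2 ≤ ∑ i, ∑ j, p i * A i j * p j)
    (q : Fin 5 → ℝ) (hq : q ≠ 0) (ha' : a * ∑ i, (q i)^2 ≤ ∑ i, ∑ j, q i * A i j * q j)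
    (hpq : ∀ i, p i * q i = 0) : a + b ≤ A.trace := by
  rcases pair_supp p q hpq with ⟨i, j, hij, h⟩ | ⟨i, j, hij, h⟩
  · exact fin_step A hsym hnn a b hb p hp ha i j hij h
  · exact fin_step A hsym hnn a b hb q hq ha' i j hij h

theorem mixed (A : Matrix (Fin 5) (Fin 5) ℝ) (hsym : A.IsSymm) (hnn : ∀ i j, 0 ≤ A i j)
    (a b m : ℝ) (hb : ∀ z : Fin 5 → ℝ, b * ∑ i, (z i)^2 ≤ ∑ i, ∑ j, z i * A i j * z j)
    (ham : a ≤ m) (x : Fin 5 → ℝ) (hx : A *ᵥ x = m • x) (h1 : ∃ i, 0 < x i) (h2 : ∃ i, x i < 0) :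
    a + b ≤ A.trace := by
  obtain ⟨i, hi⟩ := h1
  obtain ⟨j, hj⟩ := h2
  have hx' : A *ᵥ (-x) = m • (-x) := by rw [mulVec_neg, hx, smul_neg]
  have e1 := half_ray A hnn x m hx
  have e2 := half_ray A hnn (-x) m hx'
  refine fin_step2 A hsym hnn a b hb (fun i => max (x i) 0) ?_ (le_trans ?_ e1)
    (fun i => max ((-x) i) 0) ?_ (le_trans ?_ e2) ?_
  · intro h
    have := congrFun h i
    simp at this; linarith
  · exact mul_le_mul_of_nonneg_right ham (Finset.sum_nonneg fun _ _ => sq_nonneg _)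
  · intro h
    have := congrFun h j
    simp at this; linarith
  · exact mul_le_mul_of_nonneg_right ham (Finset.sum_nonneg fun _ _ => sq_nonneg _)
  · intro k
    rcases le_total (x k) 0 with h | h
    · simp [h]
    · simp [h]

theorem ray_eq (A : Matrix (Fin 5) (Fin 5) ℝ) (a m : ℝ) (ham : a ≤ m) (x : Fin 5 → ℝ)
    (hx : A *ᵥ x = m • x) : a * ∑ i, (x i)^2 ≤ ∑ i, ∑ j, x i * A i j * x j := by
  refine (mul_le_mul_of_nonneg_right ham (Finset.sum_nonneg fun _ _ => sq_nonneg _)).trans ?_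
  rw [Finset.mul_sum]
  apply le_of_eq
  apply Finset.sum_congr rfl
  intro i _
  have h1 : ∑ j, A i j * x j = m * x i := by
    have := congrFun hx i
    simpa [mulVec, dotProduct] using this
  simp_rw [mul_assoc, ← Finset.mul_sum, h1]; ring

theorem core (A : Matrix (Fin 5) (Fin 5) ℝ) (hsym : A.IsSymm) (hnn : ∀ i j, 0 ≤ A i j)
    (a b m : ℝ) (hb : ∀ z : Fin 5 → ℝ, b * ∑ i, (z i)^2 ≤ ∑ i, ∑ j, z i * A i j * z j)
    (ham : a ≤ m) (u x : Fin 5 → ℝ) (hu : A *ᵥ u = m • u) (hx : A *ᵥ x = a • x)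
    (hu0 : u ≠ 0) (hx0 : x ≠ 0) (hux : ∑ i, u i * x i = 0) :
    a + b ≤ A.trace := by
  by_cases mu : (∃ i, 0 < u i) ∧ (∃ i, u i < 0)
  · exact mixed A hsym hnn a b m hb ham u hu mu.1 mu.2
  by_cases mx : (∃ i, 0 < x i) ∧ (∃ i, x i < 0)
  · exact mixed A hsym hnn a b a hb le_rfl x hx mx.1 mx.2
  refine fin_step2 A hsym hnn a b hb u hu0 (ray_eq A a m ham u hu) x hx0 (ray_eq A a a le_rfl x hx) ?_
  have s1 : (∀ i, u i ≤ 0) ∨ (∀ i, 0 ≤ u i) := by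
    by_contra! hc
    exact mu hc
  have s2 : (∀ i, x i ≤ 0) ∨ (∀ i, 0 ≤ x i) := by
    by_contra! hc
    exact mx hc
  have s3 : (∀ i, 0 ≤ u i * x i) ∨ (∀ i, u i * x i ≤ 0) := by
    rcases s1 with s1 | s1 <;> rcases s2 with s2 | s2
    · exact Or.inl fun i => mul_nonneg_of_nonpos_of_nonpos (s1 i) (s2 i)
    · exact Or.inr fun i => mul_nonpos_of_nonpos_of_nonneg (s1 i) (s2 i)
    · exact Or.inr fun i => mul_nonpos_of_nonneg_of_nonpos (s1 i) (s2 i)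
    · exact Or.inl fun i => mul_nonneg (s1 i) (s2 i)
  intro i
  rcases s3 with s3 | s3
  · exact (Finset.sum_eq_zero_iff_of_nonneg (fun i _ => s3 i)).1 hux i (Finset.mem_univ i)
  · exact (Finset.sum_eq_zero_iff_of_nonpos (fun i _ => s3 i)).1 hux i (Finset.mem_univ i)

theorem exists_perm_of_map (f g : Fin 5 → ℝ)
    (h : Multiset.map f Finset.univ.val = Multiset.map g Finset.univ.val) :
    ∃ σ : Fin 5 → Fin 5, Function.Injective σ ∧ ∀ i, f i = g (σ i) := by
  classical
  have hc : ∀ y, Nonempty ({i // f i = y} ≃ {i // g i = y}) := by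
    intro y
    rw [← Fintype.card_eq]
    have := congrArg (Multiset.count y) h
    simp only [Multiset.count_map] at this
    rw [Fintype.card_subtype, Fintype.card_subtype]
    simpa [Finset.card_def, Finset.filter_val, eq_comm] using this
  let e := (Equiv.sigmaFiberEquiv f).symm.trans
    ((Equiv.sigmaCongrRight fun y => (hc y).some).trans (Equiv.sigmaFiberEquiv g))
  refine ⟨e, e.injective, fun i => ?_⟩
  exact ((hc (f i)).some ⟨i, rfl⟩).2.symm

theorem stmt_4 (A : Matrix (Fin 5) (Fin 5) ℝ) (hsym : A.IsSymm)
    (hnn : ∀ i j, 0 ≤ A i j) (l : Fin 5 → ℝ)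
    (hord : l 1 ≤ l 0 ∧ l 2 ≤ l 1 ∧ l 3 ≤ l 2 ∧ l 4 ≤ l 3)
    (hchar : A.charpoly = ∏ i, (X - C (l i))) :
    l 1 + l 4 ≤ A.trace := by
  have hA : A.IsHermitian := by
    rw [Matrix.IsHermitian, conjTranspose_eq_transpose_of_trivial]; exact hsym
  have hr := hA.roots_charpoly_eq_eigenvalues
  have hl : A.charpoly.roots = Multiset.map l Finset.univ.val := by
    rw [hchar]
    have := roots_multiset_prod_X_sub_C (Multiset.map l Finset.univ.val)
    rw [Multiset.map_map] at this
    exact this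
  rw [hl] at hr
  obtain ⟨σ, hσ, hlσ⟩ := exists_perm_of_map l hA.eigenvalues hr
  have hσb : Function.Bijective σ := Finite.injective_iff_bijective.1 hσ
  have hmin : ∀ k, l 4 ≤ hA.eigenvalues k := by
    intro k
    obtain ⟨i, rfl⟩ := hσb.2 k
    rw [← hlσ]
    fin_cases i <;> simp <;> linarith [hord.1, hord.2.1, hord.2.2.1, hord.2.2.2]
  set v : Fin 5 → Fin 5 → ℝ := fun i => (hA.eigenvectorBasis i).ofLp with hv
  have hev : ∀ i, A *ᵥ v i = hA.eigenvalues i • v i := fun i => hA.mulVec_eigenvectorBasis i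
  have hin : ∀ i (z : Fin 5 → ℝ), inner ℝ (hA.eigenvectorBasis i) (WithLp.toLp 2 z) = ∑ k, v i k * z k := by
    intro i z
    simp [PiLp.inner_apply, hv, mul_comm]
  have hb : ∀ z : Fin 5 → ℝ, l 4 * ∑ i, (z i)^2 ≤ ∑ i, ∑ j, z i * A i j * z j := by
    intro z
    have e0 : ∀ y : Fin 5 → ℝ, ∑ i, (∑ k, v i k * z k) * (∑ k, v i k * y k) = ∑ k, z k * y k := by
      intro y
      have := hA.eigenvectorBasis.sum_inner_mul_inner (WithLp.toLp 2 z) (WithLp.toLp 2 y)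
      simp_rw [real_inner_comm _ (WithLp.toLp 2 z), hin] at this
      rw [this]
      simp [PiLp.inner_apply, mul_comm]
    have e1 := e0 z
    have e2 := e0 (A *ᵥ z)
    have e3 : ∀ i, ∑ k, v i k * (A *ᵥ z) k = hA.eigenvalues i * ∑ k, v i k * z k := by
      intro i
      change v i ⬝ᵥ (A *ᵥ z) = _ * (v i ⬝ᵥ z)
      rw [dotProduct_mulVec, ← mulVec_transpose, hsym.eq, hev, smul_dotProduct, smul_eq_mul]
    have e4 : ∑ i, ∑ j, z i * A i j * z j = ∑ k, z k * (A *ᵥ z) k := by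
      simp [mulVec, dotProduct, Finset.mul_sum, mul_assoc]
    have e5 : ∑ i, (z i)^2 = ∑ k, z k * z k := by simp [sq]
    rw [e4, e5, ← e1, ← e2, Finset.mul_sum]
    apply Finset.sum_le_sum
    intro i _
    rw [e3 i]
    generalize (∑ k, v i k * z k) = w
    have e6 := mul_le_mul_of_nonneg_right (hmin i) (mul_self_nonneg w)
    rw [mul_left_comm w]
    exact e6
  have hne : ∀ i, v i ≠ 0 := by
    intro i h
    apply hA.eigenvectorBasis.orthonormal.ne_zero i
    ext k
    exact congrFun h k
  refine core A hsym hnn (l 1) (l 4) (l 0) hb hord.1 (v (σ 0)) (v (σ 1)) ?_ ?_ (hne _) (hne _) ?_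
  · rw [hlσ 0]; exact hev _
  · rw [hlσ 1]; exact hev _
  · rw [← hin]
    exact hA.eigenvectorBasis.orthonormal.2 (fun h => absurd (hσ h) (by decide))
end

section
/- Let n be a positive integer and let λ₁ ≥ 0 ≥ λ₂ ≥ λ₃ ≥ ⋯ ≥ λₙ be real numbers with λ₁ + λ₂ + ⋯ + λₙ ≥ 0. Then there exists an n×n real symmetric matrix A with all entries nonnegative whose characteristic polynomial is (t−λ₁)(t−λ₂)⋯(t−λₙ); moreover λ₁ is the spectral radius (Perron eigenvalue) of A. -/
open Polynomial Matrix

theorem border_charpoly {ι : Type} [Fintype ι] [DecidableEq ι] (A : Matrix ι ι ℝ) (u : ι → ℝ)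
    (r a : ℝ) (hu : ∑ i, u i * u i = 1) (hA : ∀ i, ∑ j, A i j * u j = a * u i) :
    (fromBlocks A (Matrix.of fun i (_ : Fin 1) => r * u i)
      (Matrix.of fun (_ : Fin 1) i => r * u i) 0).charpoly * (X - C a)
      = A.charpoly * (X * (X - C a) - C (r ^ 2)) := by
  have key : charmatrix (fromBlocks A (Matrix.of fun i (_ : Fin 1) => r * u i)
      (Matrix.of fun (_ : Fin 1) i => r * u i) 0) *
      fromBlocks 1 (Matrix.of fun i (_ : Fin 1) => C (r * u i)) 0
        (Matrix.of fun (_ _ : Fin 1) => (X - C a)) =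
      fromBlocks (charmatrix A) 0 (Matrix.of fun (_ : Fin 1) i => - C (r * u i))
        (Matrix.of fun (_ _ : Fin 1) => (X * (X - C a) - C (r ^ 2))) := by
    rw [charmatrix_fromBlocks, fromBlocks_multiply]
    congr 1
    · simp
    · ext1 i j
      have h1 : ∑ x, charmatrix A i x * C (r * u x) = (X - C a) * C (r * u i) := by
        simp only [charmatrix, sub_mul, Matrix.sub_apply, Finset.sum_sub_distrib]
        congr 1
        · simp [Matrix.scalar_apply, Matrix.diagonal_apply]
        · simp only [RingHom.mapMatrix_apply, Matrix.map_apply, ← C_mul, ← map_sum]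
          congr 1
          have := hA i
          calc _ = r * ∑ j, A i j * u j := by
                rw [Finset.mul_sum]; exact Finset.sum_congr rfl fun _ _ => by ring
            _ = _ := by rw [this]; ring
      simp only [Matrix.add_apply, Matrix.mul_apply, Matrix.of_apply, Matrix.neg_apply,
        Matrix.map_apply, h1, Finset.univ_unique, Finset.sum_singleton, Matrix.zero_apply]
      ring
    · ext1 i j
      simp
    · ext1 i j
      have hs : ∑ x, -C (r * u x) * C (r * u x) = - C (r ^ 2) := by
        simp only [neg_mul, Finset.sum_neg_distrib, ← C_mul, ← map_sum]
        congr 2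
        calc _ = r ^ 2 * ∑ j, u j * u j := by
                rw [Finset.mul_sum]; exact Finset.sum_congr rfl fun _ _ => by ring
            _ = _ := by rw [hu]; ring
      have hij : i = j := Subsingleton.elim _ _
      have hz : charmatrix (0 : Matrix (Fin 1) (Fin 1) ℝ) i default = X := by
        rw [Subsingleton.elim i default]; simp [charmatrix]
      simp only [Matrix.add_apply, Matrix.mul_apply, Matrix.of_apply, Matrix.neg_apply,
        Matrix.map_apply, hs, Finset.univ_unique, Finset.sum_singleton, hz]
      ring
  have := congrArg Matrix.det key
  rw [det_mul, det_fromBlocks_zero₂₁, det_fromBlocks_zero₁₂] at this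
  simpa [Matrix.charpoly] using this

theorem main_aux (k : ℕ) : ∀ (a : ℝ) (l : Fin k → ℝ), (∀ i, l i ≤ 0) → 0 ≤ a + ∑ i, l i →
    ∃ (A : Matrix (Fin (k+1)) (Fin (k+1)) ℝ) (u : Fin (k+1) → ℝ), A.IsSymm ∧ (∀ i j, 0 ≤ A i j) ∧
      (∀ i, 0 ≤ u i) ∧ ∑ i, u i * u i = 1 ∧ (∀ i, ∑ j, A i j * u j = a * u i) ∧
      A.charpoly = (X - C a) * ∏ i, (X - C (l i)) := by
  induction k with
  | zero =>
    intro a l _ hs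
    refine ⟨Matrix.of fun _ _ => a, fun _ => 1, ?_, ?_, ?_, ?_, ?_, ?_⟩
    · ext i j; simp
    · intro i j; simpa using hs
    · simp
    · simp
    · simp
    · simp [Matrix.charpoly, charmatrix]
  | succ k ih =>
    intro a l hl hs
    set b := l (Fin.last k) with hb
    have hb0 : b ≤ 0 := hl _
    rw [Fin.sum_univ_castSucc] at hs
    have hs' : ∑ i : Fin k, l i.castSucc ≤ 0 := Finset.sum_nonpos fun i _ => hl _
    have ha : 0 ≤ a := by linarith
    obtain ⟨A, u, hsym, hA, hu, hun, hev, hcp⟩ := ih (a + b) (fun i => l i.castSucc)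
      (fun i => hl _) (by linarith)
    set r := Real.sqrt a * Real.sqrt (-b) with hr
    have hsa := Real.mul_self_sqrt ha
    have hsb := Real.mul_self_sqrt (neg_nonneg.2 hb0)
    have hr0 : 0 ≤ r := by positivity
    have hr2 : r ^ 2 = - (a * b) := by
      rw [hr]
      calc _ = (√a * √a) * (√(-b) * √(-b)) := by ring
        _ = _ := by rw [hsa, hsb]; ring
    obtain ⟨x, y, hx, hy, hxy, e1, e2⟩ : ∃ x y : ℝ, 0 ≤ x ∧ 0 ≤ y ∧ x * x + y * y = 1 ∧
        (a + b) * x + r * y = a * x ∧ r * x = a * y := by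
      rcases ha.eq_or_lt with h | h
      · have : b = 0 := by linarith
        exact ⟨1, 0, by simp, by simp, by simp, by simp [this], by simp [hr, ← h]⟩
      · have hd : 0 < a - b := by linarith
        have hsd := Real.mul_self_sqrt hd.le
        have hsp : 0 < √(a - b) := Real.sqrt_pos.2 hd
        refine ⟨√a / √(a-b), √(-b) / √(a-b), by positivity, by positivity, ?_, ?_, ?_⟩
        · field_simp
          nlinarith
        · field_simp
          rw [hr]
          linear_combination √a * hsb
        · field_simp
          rw [hr]
          linear_combination √(-b) * hsa
    let M := fromBlocks A (Matrix.of fun i (_ : Fin 1) => r * u i)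
      (Matrix.of fun (_ : Fin 1) i => r * u i) 0
    let w : Fin (k+1) ⊕ Fin 1 → ℝ := Sum.elim (fun i => x * u i) (fun _ => y)
    let e : Fin (k+1) ⊕ Fin 1 ≃ Fin (k+1+1) := finSumFinEquiv
    have hM : ∀ i j, 0 ≤ M i j := by
      rintro (i | i) (j | j)
      · exact hA i j
      · exact mul_nonneg hr0 (hu i)
      · exact mul_nonneg hr0 (hu j)
      · exact le_rfl
    have hMs : M.IsSymm := by
      refine Matrix.IsSymm.fromBlocks hsym ?_ ?_
      · rfl
      · simp [Matrix.IsSymm]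
    have hMw : ∀ i, ∑ j, M i j * w j = a * w i := by
      rintro (i | i)
      · have : ∑ j, A i j * (x * u j) = x * ∑ j, A i j * u j := by
          rw [Finset.mul_sum]; exact Finset.sum_congr rfl fun _ _ => by ring
        simp [M, w, Fintype.sum_sum_type, this, hev]
        linear_combination u i * e1
      · have : ∑ j, r * u j * (x * u j) = r * x * ∑ j, u j * u j := by
          rw [Finset.mul_sum]; exact Finset.sum_congr rfl fun _ _ => by ring
        simp [M, w, Fintype.sum_sum_type, this, hun, e2]
    have hww : ∑ i, w i * w i = 1 := by
      have : ∑ j, x * u j * (x * u j) = x * x * ∑ j, u j * u j := by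
          rw [Finset.mul_sum]; exact Finset.sum_congr rfl fun _ _ => by ring
      simp [w, Fintype.sum_sum_type, this, hun, hxy]
    have hw : ∀ i, 0 ≤ w i := by
      rintro (i | i)
      · exact mul_nonneg hx (hu i)
      · exact hy
    refine ⟨Matrix.reindex e e M, fun i => w (e.symm i), ?_, fun i j => hM _ _, fun i => hw _,
      ?_, ?_, ?_⟩
    · exact hMs.submatrix _
    · rw [← hww]; exact Equiv.sum_comp e.symm (fun i => w i * w i)
    · intro i
      rw [← hMw]; exact Equiv.sum_comp e.symm (fun j => M (e.symm i) j * w j)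
    · rw [charpoly_reindex]
      have h := border_charpoly A u r (a + b) hun hev
      refine mul_right_cancel₀ (X_sub_C_ne_zero (a + b)) (h.trans ?_)
      rw [hcp, hr2, Fin.prod_univ_castSucc, ← hb]
      simp only [C_neg, C_mul, C_add]
      ring

theorem stmt_5 (n : ℕ) (hn : 0 < n) (l : Fin n → ℝ)
    (h0 : 0 ≤ l ⟨0, hn⟩)
    (hneg : ∀ i : Fin n, 1 ≤ (i : ℕ) → l i ≤ 0)
    (hmono : ∀ i j : Fin n, i ≤ j → l j ≤ l i)
    (hsum : 0 ≤ ∑ i, l i) :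
    ∃ A : Matrix (Fin n) (Fin n) ℝ, A.IsSymm ∧ (∀ i j, 0 ≤ A i j) ∧
      A.charpoly = ∏ i, (X - C (l i)) ∧
      l ⟨0, hn⟩ ∈ spectrum ℝ A ∧ ∀ μ ∈ spectrum ℝ A, |μ| ≤ l ⟨0, hn⟩ := by
  obtain ⟨k, rfl⟩ : ∃ k, n = k + 1 := ⟨n - 1, by omega⟩
  have hz : (⟨0, hn⟩ : Fin (k+1)) = 0 := rfl
  rw [hz] at h0 ⊢
  rw [Fin.sum_univ_succ] at hsum
  have hl : ∀ i : Fin k, l i.succ ≤ 0 := fun i => hneg _ (by simp)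
  obtain ⟨A, u, hsym, hA, -, -, -, hcp⟩ := main_aux k (l 0) (fun i => l i.succ) hl hsum
  have hcp' : A.charpoly = ∏ i, (X - C (l i)) := by rw [hcp, Fin.prod_univ_succ]
  have hspec : ∀ μ, μ ∈ spectrum ℝ A ↔ ∃ i, μ = l i := by
    intro μ
    rw [Matrix.mem_spectrum_iff_isRoot_charpoly, hcp', IsRoot.def, eval_prod,
      Finset.prod_eq_zero_iff]
    simp [sub_eq_zero]
  refine ⟨A, hsym, hA, hcp', (hspec _).2 ⟨0, rfl⟩, ?_⟩
  intro μ hμ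
  obtain ⟨i, rfl⟩ := (hspec μ).1 hμ
  refine Fin.cases ?_ (fun i => ?_) i
  · rw [abs_of_nonneg h0]
  · rw [abs_of_nonpos (hl i)]
    have : ∑ j : Fin k, -l j.succ ≥ -l i.succ :=
      Finset.single_le_sum (f := fun j : Fin k => -l j.succ)
        (fun j _ => neg_nonneg.2 (hl j)) (Finset.mem_univ i)
    rw [Finset.sum_neg_distrib] at this
    linarith
end

section
/- Let S be an m×m real symmetric matrix with all entries nonnegative whose eigenvalues (with multiplicity) are α₁, α₂, …, α_m, where α₁ is the spectral radius of S. Let T be an n×n real symmetric matrix with all entries nonnegative whose eigenvalues (with multiplicity) are β₁, β₂, …, β_n, where β₁ is the spectral radius of T. Suppose α₁ ≥ β₁ and ε ≥ 0. Then there exists an (m+n)×(m+n) real symmetric matrix with all entries nonnegative whose eigenvalues (with multiplicity) are α₁+ε, β₁−ε, α₂, …, α_m, β₂, …, β_n, and whose spectral radius is α₁+ε. -/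
open Polynomial Matrix

lemma perron_aux {k : ℕ} (S : Matrix (Fin k) (Fin k) ℝ) (a : ℝ)
    (hsym : S.IsSymm) (hnn : ∀ i j, 0 ≤ S i j) (hroot : S.charpoly.IsRoot a)
    (hrad : ∀ μ ∈ spectrum ℝ S, |μ| ≤ a) :
    ∃ u : Fin k → ℝ, (∀ i, 0 ≤ u i) ∧ u ⬝ᵥ u = 1 ∧ S *ᵥ u = a • u := by
  have hdet : (Matrix.scalar (Fin k) a - S).det = 0 := by
    rw [← Matrix.eval_charpoly]; exact hroot
  obtain ⟨w, hw0, hw⟩ := Matrix.exists_mulVec_eq_zero_iff.2 hdet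
  have hH : (Matrix.scalar (Fin k) a - S).IsHermitian := by
    unfold Matrix.IsHermitian
    rw [Matrix.conjTranspose_eq_transpose_of_trivial, Matrix.transpose_sub, hsym.eq]
    simp
  have hpsd : (Matrix.scalar (Fin k) a - S).PosSemidef := by
    rw [Matrix.posSemidef_iff_isHermitian_and_spectrum_nonneg]
    refine ⟨hH, fun x hx => ?_⟩
    have h1 : a - x ∈ spectrum ℝ S := by
      rw [spectrum.mem_iff] at hx ⊢
      intro h
      apply hx
      have : (algebraMap ℝ (Matrix (Fin k) (Fin k) ℝ)) x - (Matrix.scalar (Fin k) a - S)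
        = -((algebraMap ℝ (Matrix (Fin k) (Fin k) ℝ)) (a - x) - S) := by
        rw [map_sub]
        have : Matrix.scalar (Fin k) a = algebraMap ℝ (Matrix (Fin k) (Fin k) ℝ) a := rfl
        rw [this]; abel
      rw [this]; exact h.neg
    have := hrad _ h1
    have := le_abs_self (a - x)
    simp only [Set.mem_ofPred_eq]
    linarith
  have hq : ∀ z : Fin k → ℝ, z ⬝ᵥ ((Matrix.scalar (Fin k) a - S) *ᵥ z)
      = a * (∑ i, z i * z i) - ∑ i, ∑ j, z i * (S i j * z j) := by
    intro z
    have : (Matrix.scalar (Fin k) a) *ᵥ z = a • z := by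
      ext i; simp [Matrix.mulVec_diagonal]
    rw [Matrix.sub_mulVec, this, dotProduct_sub, dotProduct_smul]
    simp [dotProduct, Matrix.mulVec, Finset.mul_sum]
  set y : Fin k → ℝ := fun i => |w i| with hy
  have hyq : y ⬝ᵥ ((Matrix.scalar (Fin k) a - S) *ᵥ y) = 0 := by
    apply le_antisymm
    · have h0 : w ⬝ᵥ ((Matrix.scalar (Fin k) a - S) *ᵥ w) = 0 := by rw [hw]; simp
      rw [← h0, hq, hq]
      simp only [hy, abs_mul_abs_self]
      apply sub_le_sub_left
      refine Finset.sum_le_sum fun i _ => Finset.sum_le_sum fun j _ => ?_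
      calc w i * (S i j * w j) ≤ |w i * (S i j * w j)| := le_abs_self _
        _ = _ := by rw [abs_mul, abs_mul, abs_of_nonneg (hnn i j)]
    · simpa using hpsd.dotProduct_mulVec_nonneg y
  have hy0 : (Matrix.scalar (Fin k) a - S) *ᵥ y = 0 := by
    rw [← hpsd.dotProduct_mulVec_zero_iff]
    simpa using hyq
  have hSy : S *ᵥ y = a • y := by
    have : (Matrix.scalar (Fin k) a) *ᵥ y = a • y := by
      ext i; simp [Matrix.mulVec_diagonal]
    rw [Matrix.sub_mulVec, this, sub_eq_zero] at hy0
    exact hy0.symm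
  have hyy : 0 < y ⬝ᵥ y := by
    obtain ⟨i, hi⟩ := Function.ne_iff.1 hw0
    refine Finset.sum_pos' (fun i _ => mul_self_nonneg _) ⟨i, Finset.mem_univ _, ?_⟩
    exact mul_pos (abs_pos.2 hi) (abs_pos.2 hi)
  refine ⟨(Real.sqrt (y ⬝ᵥ y))⁻¹ • y, fun i => ?_, ?_, ?_⟩
  · simp only [Pi.smul_apply, smul_eq_mul, hy]; positivity
  · rw [smul_dotProduct, dotProduct_smul, smul_eq_mul, smul_eq_mul, ← mul_assoc, ← mul_inv,
      Real.mul_self_sqrt hyy.le, inv_mul_cancel₀ hyy.ne']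
  · rw [Matrix.mulVec_smul, hSy, smul_comm]

lemma charpoly_aux {k l : ℕ} (S : Matrix (Fin k) (Fin k) ℝ) (T : Matrix (Fin l) (Fin l) ℝ)
    (a b r : ℝ) (u : Fin k → ℝ) (v : Fin l → ℝ) (hu : u ⬝ᵥ u = 1) (hv : v ⬝ᵥ v = 1)
    (hSu : S *ᵥ u = a • u) (hTv : T *ᵥ v = b • v) (x : ℝ) (hxa : x ≠ a) (hxb : x ≠ b) :
    (Matrix.fromBlocks S (r • vecMulVec u v) (r • vecMulVec v u) T).charpoly.eval x =
      S.charpoly.eval x * T.charpoly.eval x * (1 - r ^ 2 / ((x - a) * (x - b))) := by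
  have hxa' := sub_ne_zero.2 hxa
  have hxb' := sub_ne_zero.2 hxb
  have key : Matrix.scalar (Fin k ⊕ Fin l) x -
      Matrix.fromBlocks S (r • vecMulVec u v) (r • vecMulVec v u) T =
      Matrix.fromBlocks (Matrix.scalar (Fin k) x - S) 0 0 (Matrix.scalar (Fin l) x - T) *
      Matrix.fromBlocks 1 (-(r / (x - a)) • vecMulVec u v) (-(r / (x - b)) • vecMulVec v u) 1 := by
    have h1 : (Matrix.scalar (Fin k) x - S) * vecMulVec u v = (x - a) • vecMulVec u v := by
      rw [Matrix.mul_vecMulVec, Matrix.sub_mulVec, hSu]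
      have : (Matrix.scalar (Fin k) x) *ᵥ u = x • u := by
        ext i; simp [Matrix.mulVec_diagonal]
      rw [this, ← sub_smul, Matrix.smul_vecMulVec]
    have h2 : (Matrix.scalar (Fin l) x - T) * vecMulVec v u = (x - b) • vecMulVec v u := by
      rw [Matrix.mul_vecMulVec, Matrix.sub_mulVec, hTv]
      have : (Matrix.scalar (Fin l) x) *ᵥ v = x • v := by
        ext i; simp [Matrix.mulVec_diagonal]
      rw [this, ← sub_smul, Matrix.smul_vecMulVec]
    have h3 : Matrix.scalar (Fin k ⊕ Fin l) x =
        Matrix.fromBlocks (Matrix.scalar (Fin k) x) 0 0 (Matrix.scalar (Fin l) x) := by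
      simp [Matrix.scalar_apply, Matrix.fromBlocks_diagonal]
    rw [h3, Matrix.fromBlocks_multiply, sub_eq_add_neg, Matrix.fromBlocks_neg,
      Matrix.fromBlocks_add]
    simp only [Matrix.mul_smul, h1, h2, smul_smul, Matrix.mul_one, Matrix.zero_mul, add_zero,
      zero_add, smul_zero]
    congr 1
    · rw [← neg_smul]; congr 1; field_simp
    · rw [← neg_smul]; congr 1; field_simp
  rw [Matrix.eval_charpoly, key, Matrix.det_mul, Matrix.det_fromBlocks_zero₂₁,
    ← Matrix.eval_charpoly, ← Matrix.eval_charpoly, Matrix.det_fromBlocks_one₁₁]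
  congr 1
  have h4 : (1 : Matrix (Fin l) (Fin l) ℝ) - (-(r / (x - b)) • vecMulVec v u) *
      (-(r / (x - a)) • vecMulVec u v) =
      1 + replicateCol Unit (-(r ^ 2 / ((x - a) * (x - b))) • v) * replicateRow Unit v := by
    rw [Matrix.smul_mul, Matrix.mul_smul, Matrix.vecMulVec_mul_vecMulVec, hu,
      ← Matrix.vecMulVec_eq, Matrix.smul_vecMulVec, smul_smul, sub_eq_add_neg, ← neg_smul, one_smul]
    congr 2
    field_simp
  rw [h4, Matrix.det_one_add_replicateCol_mul_replicateRow, dotProduct_smul, hv]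
  simp
  ring

theorem stmt_6 (m n : ℕ) (α : Fin (m + 1) → ℝ) (β : Fin (n + 1) → ℝ)
    (S : Matrix (Fin (m + 1)) (Fin (m + 1)) ℝ) (T : Matrix (Fin (n + 1)) (Fin (n + 1)) ℝ)
    (hSsym : S.IsSymm) (hSnn : ∀ i j, 0 ≤ S i j)
    (hSchar : S.charpoly = ∏ i, (X - C (α i)))
    (hSrad : ∀ μ ∈ spectrum ℝ S, |μ| ≤ α 0)
    (hTsym : T.IsSymm) (hTnn : ∀ i j, 0 ≤ T i j)
    (hTchar : T.charpoly = ∏ i, (X - C (β i)))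
    (hTrad : ∀ μ ∈ spectrum ℝ T, |μ| ≤ β 0)
    (hab : β 0 ≤ α 0) (ε : ℝ) (hε : 0 ≤ ε) :
    ∃ R : Matrix (Fin (m + 1 + (n + 1))) (Fin (m + 1 + (n + 1))) ℝ,
      R.IsSymm ∧ (∀ i j, 0 ≤ R i j) ∧
      R.charpoly = (X - C (α 0 + ε)) * (X - C (β 0 - ε)) *
        (∏ i : Fin m, (X - C (α i.succ))) * (∏ j : Fin n, (X - C (β j.succ))) ∧
      (α 0 + ε) ∈ spectrum ℝ R ∧ ∀ μ ∈ spectrum ℝ R, |μ| ≤ α 0 + ε := by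
  have hSr : ∀ i, S.charpoly.IsRoot (α i) := fun i => by
    rw [hSchar, Polynomial.IsRoot, Polynomial.eval_prod]
    exact Finset.prod_eq_zero (Finset.mem_univ i) (by simp)
  have hTr : ∀ i, T.charpoly.IsRoot (β i) := fun i => by
    rw [hTchar, Polynomial.IsRoot, Polynomial.eval_prod]
    exact Finset.prod_eq_zero (Finset.mem_univ i) (by simp)
  have hα : ∀ i, |α i| ≤ α 0 := fun i =>
    hSrad _ (Matrix.mem_spectrum_iff_isRoot_charpoly.2 (hSr i))
  have hβ : ∀ i, |β i| ≤ β 0 := fun i =>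
    hTrad _ (Matrix.mem_spectrum_iff_isRoot_charpoly.2 (hTr i))
  have hα0 : 0 ≤ α 0 := (abs_nonneg _).trans (hα 0)
  have hβ0 : 0 ≤ β 0 := (abs_nonneg _).trans (hβ 0)
  obtain ⟨u, hu0, hu1, hSu⟩ := perron_aux S (α 0) hSsym hSnn (hSr 0) hSrad
  obtain ⟨v, hv0, hv1, hTv⟩ := perron_aux T (β 0) hTsym hTnn (hTr 0) hTrad
  set r := Real.sqrt (ε * (α 0 - β 0 + ε)) with hr
  have hr0 : 0 ≤ r := Real.sqrt_nonneg _
  have hr2 : r ^ 2 = ε * (α 0 - β 0 + ε) := Real.sq_sqrt (mul_nonneg hε (by linarith))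
  set R₀ := Matrix.fromBlocks S (r • vecMulVec u v) (r • vecMulVec v u) T with hR₀
  have hchar : R₀.charpoly = (X - C (α 0 + ε)) * (X - C (β 0 - ε)) *
        (∏ i : Fin m, (X - C (α i.succ))) * (∏ j : Fin n, (X - C (β j.succ))) := by
    apply Polynomial.eq_of_infinite_eval_eq
    refine Set.Infinite.mono ?_ (Set.Finite.infinite_compl (Set.toFinite {α 0, β 0}))
    intro x hx
    simp only [Set.mem_compl_iff, Set.mem_insert_iff, Set.mem_singleton_iff, not_or] at hx
    have hxa' := sub_ne_zero.2 hx.1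
    have hxb' := sub_ne_zero.2 hx.2
    rw [Set.mem_ofPred_eq, hR₀, charpoly_aux S T (α 0) (β 0) r u v hu1 hv1 hSu hTv x hx.1 hx.2,
      hSchar, hTchar, Fin.prod_univ_succ, Fin.prod_univ_succ, hr2]
    simp only [Polynomial.eval_mul, Polynomial.eval_sub, Polynomial.eval_X, Polynomial.eval_C]
    field_simp
    ring
  have hchar' : (Matrix.reindex finSumFinEquiv finSumFinEquiv R₀).charpoly =
      (X - C (α 0 + ε)) * (X - C (β 0 - ε)) *
        (∏ i : Fin m, (X - C (α i.succ))) * (∏ j : Fin n, (X - C (β j.succ))) := by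
    rw [Matrix.charpoly_reindex, hchar]
  refine ⟨Matrix.reindex finSumFinEquiv finSumFinEquiv R₀, ?_, ?_, hchar', ?_, ?_⟩
  · have : R₀.IsSymm := by
      refine Matrix.IsSymm.fromBlocks hSsym ?_ hTsym
      rw [Matrix.transpose_smul, Matrix.transpose_vecMulVec]
    exact this.submatrix _
  · have : ∀ i j, 0 ≤ R₀ i j := by
      rintro (i | i) (j | j)
      · exact hSnn i j
      · exact mul_nonneg hr0 (mul_nonneg (hu0 i) (hv0 j))
      · exact mul_nonneg hr0 (mul_nonneg (hv0 i) (hu0 j))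
      · exact hTnn i j
    exact fun i j => this _ _
  · rw [Matrix.mem_spectrum_iff_isRoot_charpoly, hchar']
    simp [Polynomial.IsRoot]
  · intro μ hμ
    rw [Matrix.mem_spectrum_iff_isRoot_charpoly, hchar'] at hμ
    simp only [Polynomial.IsRoot, Polynomial.eval_mul, Polynomial.eval_prod, Polynomial.eval_sub,
      Polynomial.eval_X, Polynomial.eval_C, mul_eq_zero, Finset.prod_eq_zero_iff, sub_eq_zero,
      Finset.mem_univ, true_and] at hμ
    rcases hμ with ((h | h) | ⟨i, h⟩) | ⟨i, h⟩
    · rw [h, abs_of_nonneg (by linarith)]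
    · rw [h, abs_le]; constructor <;> linarith
    · rw [h]; linarith [hα i.succ]
    · rw [h]; linarith [hβ i.succ]
end

section
/- Let n ≥ 4 and let λ₁ ≥ λ₂ ≥ 0 ≥ λ₃ ≥ ⋯ ≥ λₙ be real numbers with λ₁ + λ₂ + ⋯ + λₙ ≥ 0. Suppose K₁, K₂ is a partition of {3, 4, …, n} (i.e., K₁ ∪ K₂ = {3,…,n} and K₁ ∩ K₂ = ∅) such that λ₁ ≥ −∑_{i∈K₁} λᵢ ≥ −∑_{i∈K₂} λᵢ. Then there exists an n×n real symmetric matrix A with all entries nonnegative whose characteristic polynomial is (t−λ₁)(t−λ₂)⋯(t−λₙ); moreover λ₁ is the spectral radius (Perron eigenvalue) of A. -/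
open Polynomial Matrix

def RealX (a : ℝ) (p : ℝ[X]) : Prop :=
  ∃ (V ι : Type) (_ : Fintype V) (_ : Fintype ι) (_ : DecidableEq V) (_ : DecidableEq ι)
    (d : ι → ℝ) (A : Matrix V V ℝ) (u : V → ℝ) (q : ι → V → ℝ),
    Fintype.card V = Fintype.card ι + 1 ∧ p = ∏ i, (X - C (d i)) ∧
    A.IsSymm ∧ (∀ i j, 0 ≤ A i j) ∧ (∀ i, 0 ≤ u i) ∧ u ⬝ᵥ u = 1 ∧ A *ᵥ u = a • u ∧
    (∀ i, A *ᵥ q i = d i • q i) ∧ (∀ i j, q i ⬝ᵥ q j = if i = j then 1 else 0) ∧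
    (∀ i, u ⬝ᵥ q i = 0)

theorem realX_one (a : ℝ) (ha : 0 ≤ a) : RealX a 1 := by
  refine ⟨Unit, Empty, inferInstance, inferInstance, inferInstance, inferInstance,
    Empty.elim, fun _ _ => a, fun _ => 1, fun i => i.elim, by simp, by simp, ?_, fun _ _ => ha,
    fun _ => zero_le_one, ?_, ?_, fun i => i.elim, fun i => i.elim, fun i => i.elim⟩
  · ext i j; rfl
  · simp [dotProduct]
  · ext i; simp [mulVec, dotProduct]

theorem realX_glue0 {a b x y c s : ℝ} {p q : ℝ[X]} (hp : RealX a p) (hq : RealX b q)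
    (hc : 0 ≤ c) (hs : 0 ≤ s) (hcs : c ^ 2 + s ^ 2 = 1) (hyx : y ≤ x)
    (ha : a = x * c ^ 2 + y * s ^ 2) (hb : b = x * s ^ 2 + y * c ^ 2) :
    RealX x ((X - C y) * p * q) := by
  obtain ⟨V, ι, _, _, _, _, d, A, u, f, hcard, hpe, hA, hAn, hun, huu, hAu, hAf, hff, huf⟩ := hp
  obtain ⟨W, κ, _, _, _, _, e, B, v, g, hcard', hqe, hB, hBn, hvn, hvv, hBv, hBg, hgg, hvg⟩ := hq
  have hρ : 0 ≤ (x - y) * c * s := by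
    have := sub_nonneg.2 hyx
    positivity
  have hfu : ∀ i, f i ⬝ᵥ u = 0 := fun i => by rw [dotProduct_comm, huf]
  have hgv : ∀ i, g i ⬝ᵥ v = 0 := fun i => by rw [dotProduct_comm, hvg]
  have key : ∀ z w, (fromBlocks A (((x - y) * c * s) • vecMulVec u v)
      (((x - y) * c * s) • vecMulVec v u) B) *ᵥ (Sum.elim z w) =
      Sum.elim (A *ᵥ z + ((x - y) * c * s * (v ⬝ᵥ w)) • u)
        (((x - y) * c * s * (u ⬝ᵥ z)) • v + B *ᵥ w) := by
    intro z w
    rw [fromBlocks_mulVec]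
    ext (i | i)
    · simp [smul_mulVec, vecMulVec_mulVec]; ring
    · simp [smul_mulVec, vecMulVec_mulVec]; ring
  refine ⟨V ⊕ W, Option (ι ⊕ κ), inferInstance, inferInstance, inferInstance, inferInstance,
    fun o => o.elim y (Sum.elim d e),
    fromBlocks A (((x - y) * c * s) • vecMulVec u v) (((x - y) * c * s) • vecMulVec v u) B,
    Sum.elim (c • u) (s • v),
    fun o => o.elim (Sum.elim ((-s) • u) (c • v))
      (Sum.elim (fun i => Sum.elim (f i) 0) (fun j => Sum.elim 0 (g j))),
    ?_, ?_, ?_, ?_, ?_, ?_, ?_, ?_, ?_, ?_⟩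
  · simp [hcard, hcard']; ring
  · simp [Fintype.prod_option, hpe, hqe, mul_assoc]
  · refine IsSymm.fromBlocks hA ?_ hB
    ext i j; simp [vecMulVec, mul_comm]
  · rintro (i | i) (j | j)
    · exact hAn i j
    · exact mul_nonneg hρ (mul_nonneg (hun _) (hvn _))
    · exact mul_nonneg hρ (mul_nonneg (hvn _) (hun _))
    · exact hBn i j
  · rintro (i | i)
    · exact mul_nonneg hc (hun _)
    · exact mul_nonneg hs (hvn _)
  · simp [sumElim_dotProduct_sumElim, huu, hvv]; linarith
  · rw [key, mulVec_smul, mulVec_smul, hAu, hBv]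
    ext (i | i)
    · simp [huu, hvv, ha]; linear_combination (x * c * u i) * hcs
    · simp [huu, hvv, hb]; linear_combination (x * s * v i) * hcs
  · rintro (_ | i | i)
    · simp only [Option.elim]
      rw [key, mulVec_smul, mulVec_smul, hAu, hBv]
      ext (i | i)
      · simp [huu, hvv, ha]; linear_combination (-y * s * u i) * hcs
      · simp [huu, hvv, hb]; linear_combination (y * c * v i) * hcs
    · simp only [Option.elim, Sum.elim_inl]
      rw [key, hAf]
      ext (j | j) <;> simp [huf]
    · simp only [Option.elim, Sum.elim_inr]
      rw [key, hBg]
      ext (j | j) <;> simp [hvg]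
  · rintro (_ | i | i) (_ | j | j) <;>
      simp [sumElim_dotProduct_sumElim, huu, hvv, hff, hgg, huf, hvg, hfu, hgv]
    linarith
  · rintro (_ | i | i) <;> simp [sumElim_dotProduct_sumElim, huu, hvv, huf, hvg]
    ring

theorem realX_glue {a b x y : ℝ} {p q : ℝ[X]} (hp : RealX a p) (hq : RealX b q)
    (hyb : y ≤ b) (hbx : b ≤ x) (hs : a + b = x + y) :
    RealX x ((X - C y) * p * q) := by
  rcases eq_or_lt_of_le (hyb.trans hbx) with h | h
  · exact realX_glue0 hp hq (c := 1) (s := 0) (by norm_num) le_rfl (by norm_num) h.le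
      (by linarith) (by linarith)
  · have h0 : 0 < x - y := by linarith
    have h1 : 0 ≤ (b - y) / (x - y) := div_nonneg (by linarith) h0.le
    have h2 : 0 ≤ (x - b) / (x - y) := div_nonneg (by linarith) h0.le
    refine realX_glue0 hp hq (c := √((x - b) / (x - y))) (s := √((b - y) / (x - y)))
      (Real.sqrt_nonneg _) (Real.sqrt_nonneg _) ?_ h.le ?_ ?_ <;>
      rw [Real.sq_sqrt h1, Real.sq_sqrt h2]
    · field_simp; ring
    · have : a = x + y - b := by linarith
      rw [this]; field_simp; ring
    · field_simp; ring

theorem realX_sul {α : Type*} [DecidableEq α] (l : α → ℝ) (K : Finset α) :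
    (∀ i ∈ K, l i ≤ 0) → ∀ a, -∑ i ∈ K, l i ≤ a → RealX a (∏ i ∈ K, (X - C (l i))) := by
  induction K using Finset.induction_on with
  | empty => intro _ a ha; simpa using realX_one a (by simpa using ha)
  | insert i K hi ih =>
    intro h a ha
    have hK : ∑ j ∈ K, l j ≤ 0 := Finset.sum_nonpos fun j hj => h j (Finset.mem_insert_of_mem hj)
    have hli := h i (Finset.mem_insert_self _ _)
    rw [Finset.sum_insert hi] at ha
    rw [Finset.prod_insert hi]
    have := realX_glue (x := a) (y := l i)
      (ih (fun j hj => h j (Finset.mem_insert_of_mem hj)) (a + l i) (by linarith))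
      (realX_one 0 le_rfl) hli (by linarith) (by ring)
    simpa using this

theorem realX_matrix {a : ℝ} {p : ℝ[X]} {n : ℕ} (h : RealX a p) (hn : p.natDegree + 1 = n) :
    ∃ A : Matrix (Fin n) (Fin n) ℝ, A.IsSymm ∧ (∀ i j, 0 ≤ A i j) ∧
      A.charpoly = (X - C a) * p := by
  obtain ⟨V, ι, _, _, _, _, d, A, u, f, hcard, hpe, hA, hAn, hun, huu, hAu, hAf, hff, huf⟩ := h
  have hfu : ∀ i, f i ⬝ᵥ u = 0 := fun i => by rw [dotProduct_comm, huf]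
  have hd : p.natDegree = Fintype.card ι := by
    rw [hpe, natDegree_prod_of_monic _ _ (fun i _ => monic_X_sub_C _)]; simp
  have eV : V ≃ Fin n := Fintype.equivFinOfCardEq (by omega)
  have eo : V ≃ Option ι := Fintype.equivOfCardEq (by simp [hcard])
  let F : Option ι → V → ℝ := fun o => o.elim u f
  let D : Option ι → ℝ := fun o => o.elim a d
  have hF : ∀ i j, F i ⬝ᵥ F j = if i = j then 1 else 0 := by
    rintro (_ | i) (_ | j) <;> simp [F, huu, hff, huf, hfu]
  have hAF : ∀ i, A *ᵥ F i = D i • F i := by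
    rintro (_ | i) <;> simp [F, D, hAu, hAf]
  let P : Matrix V V ℝ := Matrix.of fun v w => F (eo w) v
  have hP : Pᵀ * P = 1 := by
    ext i j
    have := hF (eo i) (eo j)
    simp only [EmbeddingLike.apply_eq_iff_eq] at this
    rw [Matrix.one_apply, ← this]; rfl
  have hP' : P * Pᵀ = 1 := mul_eq_one_comm.1 hP
  have hAP : A * P = P * diagonal (fun v => D (eo v)) := by
    ext i j
    rw [mul_diagonal]
    have := congrFun (hAF (eo j)) i
    simp only [Pi.smul_apply, smul_eq_mul] at this
    rw [show P i j = F (eo j) i from rfl, mul_comm, ← this]; rfl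
  have hch : A.charpoly = (X - C a) * p := by
    have : A = P * (diagonal (fun v => D (eo v)) * Pᵀ) := by
      rw [← mul_assoc, ← hAP, mul_assoc, hP', mul_one]
    rw [this, charpoly_mul_comm, mul_assoc, hP, mul_one, charpoly_diagonal,
      Equiv.prod_comp eo (fun o => X - C (D o)), Fintype.prod_option, hpe]
    rfl
  refine ⟨reindex eV eV A, ?_, fun i j => hAn _ _, ?_⟩
  · ext i j; exact hA.apply _ _
  · rw [charpoly_reindex, hch]

theorem stmt_7 (n : ℕ) (hn : 4 ≤ n) (l : Fin n → ℝ)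
    (h2 : 0 ≤ l ⟨1, by omega⟩)
    (hneg : ∀ i : Fin n, 2 ≤ (i : ℕ) → l i ≤ 0)
    (hmono : ∀ i j : Fin n, i ≤ j → l j ≤ l i)
    (hsum : 0 ≤ ∑ i, l i)
    (K₁ K₂ : Finset (Fin n))
    (hunion : K₁ ∪ K₂ = Finset.univ.filter (fun i : Fin n => 2 ≤ (i : ℕ)))
    (hdisj : Disjoint K₁ K₂)
    (hK12 : -∑ i ∈ K₂, l i ≤ -∑ i ∈ K₁, l i)
    (hK1 : -∑ i ∈ K₁, l i ≤ l ⟨0, by omega⟩) :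
    ∃ A : Matrix (Fin n) (Fin n) ℝ, A.IsSymm ∧ (∀ i j, 0 ≤ A i j) ∧
      A.charpoly = ∏ i, (X - C (l i)) ∧
      l ⟨0, by omega⟩ ∈ spectrum ℝ A ∧ ∀ μ ∈ spectrum ℝ A, |μ| ≤ l ⟨0, by omega⟩ := by
  have hmem : ∀ i : Fin n, (i ∈ K₁ ∨ i ∈ K₂) ↔ 2 ≤ (i : ℕ) := fun i => by
    rw [← Finset.mem_union, hunion]; simp
  have hn1 : ∀ i ∈ K₁, l i ≤ 0 := fun i hi => hneg i ((hmem i).1 (Or.inl hi))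
  have hn2 : ∀ i ∈ K₂, l i ≤ 0 := fun i hi => hneg i ((hmem i).1 (Or.inr hi))
  have h01 := hmono ⟨0, by omega⟩ ⟨1, by omega⟩ (by simp)
  have huniv : (Finset.univ : Finset (Fin n)) =
      insert ⟨0, by omega⟩ (insert ⟨1, by omega⟩ (K₁ ∪ K₂)) := by
    ext i
    simp only [Finset.mem_univ, Finset.mem_insert, Finset.mem_union, hmem, Fin.ext_iff, true_iff]
    omega
  have hi1 : (⟨1, by omega⟩ : Fin n) ∉ K₁ ∪ K₂ := by
    rw [Finset.mem_union, hmem]; simp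
  have hi0 : (⟨0, by omega⟩ : Fin n) ∉ insert (⟨1, by omega⟩ : Fin n) (K₁ ∪ K₂) := by
    rw [Finset.mem_insert, Finset.mem_union, hmem]; simp
  have hprod : ∏ i, (X - C (l i)) = (X - C (l ⟨0, by omega⟩)) * ((X - C (l ⟨1, by omega⟩)) *
      (∏ i ∈ K₁, (X - C (l i))) * ∏ i ∈ K₂, (X - C (l i))) := by
    rw [huniv, Finset.prod_insert hi0, Finset.prod_insert hi1, Finset.prod_union hdisj, mul_assoc]
  rw [huniv, Finset.sum_insert hi0, Finset.sum_insert hi1, Finset.sum_union hdisj] at hsum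
  have hR : RealX (l ⟨0, by omega⟩) ((X - C (l ⟨1, by omega⟩)) *
      (∏ i ∈ K₁, (X - C (l i))) * ∏ i ∈ K₂, (X - C (l i))) := by
    refine realX_glue (b := max (l ⟨1, by omega⟩) (-∑ i ∈ K₂, l i))
      (realX_sul l K₁ hn1 (l ⟨0, by omega⟩ + l ⟨1, by omega⟩ -
        max (l ⟨1, by omega⟩) (-∑ i ∈ K₂, l i)) ?_) (realX_sul l K₂ hn2 _ (le_max_right _ _))
      (le_max_left _ _) (max_le h01 (hK12.trans hK1)) (by ring)
    rcases max_cases (l ⟨1, by omega⟩) (-∑ i ∈ K₂, l i) with h | h <;> rw [h.1] <;> linarith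
  have hdeg : (∏ i, (X - C (l i))).natDegree = n := by
    rw [natDegree_prod_of_monic _ _ (fun i _ => monic_X_sub_C _)]; simp
  have hm : ((X - C (l ⟨1, by omega⟩)) *
      (∏ i ∈ K₁, (X - C (l i))) * ∏ i ∈ K₂, (X - C (l i))).Monic :=
    ((monic_X_sub_C _).mul (monic_prod_of_monic _ _ fun i _ => monic_X_sub_C _)).mul
      (monic_prod_of_monic _ _ fun i _ => monic_X_sub_C _)
  rw [hprod, (monic_X_sub_C _).natDegree_mul hm, natDegree_X_sub_C] at hdeg
  obtain ⟨A, hA, hAn, hch⟩ := realX_matrix (n := n) hR (by omega)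
  rw [← hprod] at hch
  have hspec : ∀ μ, μ ∈ spectrum ℝ A ↔ ∃ i, μ = l i := fun μ => by
    rw [mem_spectrum_iff_isRoot_charpoly, hch, IsRoot.def, eval_prod, Finset.prod_eq_zero_iff]
    simp [sub_eq_zero]
  refine ⟨A, hA, hAn, hch, (hspec _).2 ⟨_, rfl⟩, ?_⟩
  intro μ hμ
  obtain ⟨i, rfl⟩ := (hspec μ).1 hμ
  have hle := hmono ⟨0, by omega⟩ i (by simp [Fin.le_def])
  rw [abs_le]
  refine ⟨?_, hle⟩
  by_cases hi : 2 ≤ (i : ℕ)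
  · have aux : ∀ K : Finset (Fin n), (∀ i ∈ K, l i ≤ 0) → i ∈ K → ∑ j ∈ K, l j ≤ l i := by
      intro K hK hiK
      rw [← Finset.add_sum_erase _ _ hiK]
      have := Finset.sum_nonpos (s := K.erase i) (f := l)
        fun j hj => hK j (Finset.mem_of_mem_erase hj)
      linarith
    rcases (hmem i).2 hi with h | h
    · have := aux _ hn1 h; linarith
    · have := aux _ hn2 h; linarith
  · have := hmono i ⟨1, by omega⟩ (by simp [Fin.le_def]; omega)
    linarith
end

section
/- Let d ∈ [−1/2, 0], let k be a positive even integer, and let (x,y) lie in the triangle OBJ. Then 1 + d^k + (−d−1)^k ≤ s_k ≤ 1 + (2d+1)^k + 2(−d−1)^k, where s_k = 1 + x^k + y^k + (d−x−y)^k + (−d−1)^k. Moreover the lower bound is attained at (x,y) = (0,0) and the upper bound at (x,y) = (2d+1, 0). -/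
theorem stmt_8 (d : ℝ) (hd : d ∈ Set.Icc (-1/2 : ℝ) 0) (k : ℕ) (hk : 0 < k)
    (hke : Even k) (x y : ℝ) (hy0 : 0 ≤ y) (hyx : y ≤ x) (hxy : y ≤ -x + 2*d + 1) :
    (1 + d ^ k + (-d - 1) ^ k ≤ 1 + x ^ k + y ^ k + (d - x - y) ^ k + (-d - 1) ^ k ∧
      1 + x ^ k + y ^ k + (d - x - y) ^ k + (-d - 1) ^ k ≤
        1 + (2*d + 1) ^ k + 2 * (-d - 1) ^ k) ∧
    1 + (0:ℝ) ^ k + (0:ℝ) ^ k + (d - 0 - 0) ^ k + (-d - 1) ^ k =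
      1 + d ^ k + (-d - 1) ^ k ∧
    1 + (2*d + 1) ^ k + (0:ℝ) ^ k + (d - (2*d + 1) - 0) ^ k + (-d - 1) ^ k =
      1 + (2*d + 1) ^ k + 2 * (-d - 1) ^ k := by
  obtain ⟨h1, h2⟩ := hd
  have hx0 : 0 ≤ x := hy0.trans hyx
  have hk0 : k ≠ 0 := hk.ne'
  have e1 : (d - x - y) ^ k = (x + y - d) ^ k := by
    rw [← hke.neg_pow]; congr 1; ring
  have e2 : (-d - 1) ^ k = (d + 1) ^ k := by
    rw [← hke.neg_pow]; congr 1; ring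
  have e3 : d ^ k = (-d) ^ k := (hke.neg_pow d).symm
  have e4 : (d - (2*d + 1) - 0) ^ k = (d + 1) ^ k := by
    rw [← hke.neg_pow]; congr 1; ring
  have a1 : x ^ k + y ^ k ≤ (x + y) ^ k := pow_add_pow_le hx0 hy0 hk0
  have a2 : (x + y) ^ k ≤ (2*d + 1) ^ k := pow_le_pow_left₀ (by linarith) (by linarith) k
  have a3 : (x + y - d) ^ k ≤ (d + 1) ^ k := pow_le_pow_left₀ (by linarith) (by linarith) k
  have a4 : (-d) ^ k ≤ (x + y - d) ^ k := pow_le_pow_left₀ (by linarith) (by linarith) k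
  have a5 : 0 ≤ x ^ k := pow_nonneg hx0 k
  have a6 : 0 ≤ y ^ k := pow_nonneg hy0 k
  refine ⟨⟨?_, ?_⟩, ?_, ?_⟩
  · rw [e1, e2, e3]; linarith
  · rw [e1, e2]; linarith
  · rw [zero_pow hk0, sub_zero, sub_zero]; ring
  · rw [e4, e2, zero_pow hk0]; ring
end

section
/- Let d ∈ [−1/2, 0], let k be a positive odd integer, and let (x,y) lie in the triangle OBJ. Then 1 + 2(d + 1/2)^k + 2(−d−1)^k ≤ s_k ≤ 1 + d^k + (−d−1)^k, where s_k = 1 + x^k + y^k + (d−x−y)^k + (−d−1)^k. Moreover the lower bound is attained at (x,y) = (d+1/2, d+1/2) and the upper bound at (x,y) = (0,0). -/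
theorem aux_shift (p q e : ℝ) (hq : 0 ≤ q) (hpq : q ≤ p) (he : 0 ≤ e) (n : ℕ) :
    p ^ n - q ^ n ≤ (p + e) ^ n - (q + e) ^ n := by
  induction n with
  | zero => simp
  | succ n ih =>
    have h1 : q ^ n ≤ (q + e) ^ n := pow_le_pow_left₀ hq (by linarith) n
    have h2 : q ^ n ≤ p ^ n := pow_le_pow_left₀ hq hpq n
    have h3 : p * (p ^ n - q ^ n) ≤ (p + e) * ((p + e) ^ n - (q + e) ^ n) :=
      mul_le_mul (by linarith) ih (by linarith) (by linarith)
    have h4 := mul_le_mul_of_nonneg_left h1 (sub_nonneg.2 hpq)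
    rw [pow_succ, pow_succ, pow_succ, pow_succ]
    nlinarith

theorem aux_super (a b : ℝ) (ha : 0 ≤ a) (hb : 0 ≤ b) (n : ℕ) :
    a ^ (n + 1) + b ^ (n + 1) ≤ (a + b) ^ (n + 1) := by
  have h := aux_shift a 0 b le_rfl ha hb (n + 1)
  simp at h
  linarith

theorem stmt_9 (d : ℝ) (hd : d ∈ Set.Icc (-1/2 : ℝ) 0) (k : ℕ) (hk : 0 < k)
    (hko : Odd k) (x y : ℝ) (hy0 : 0 ≤ y) (hyx : y ≤ x) (hxy : y ≤ -x + 2*d + 1) :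
    (1 + 2 * (d + 1/2) ^ k + 2 * (-d - 1) ^ k ≤
        1 + x ^ k + y ^ k + (d - x - y) ^ k + (-d - 1) ^ k ∧
      1 + x ^ k + y ^ k + (d - x - y) ^ k + (-d - 1) ^ k ≤
        1 + d ^ k + (-d - 1) ^ k) ∧
    1 + (d + 1/2) ^ k + (d + 1/2) ^ k + (d - (d + 1/2) - (d + 1/2)) ^ k + (-d - 1) ^ k =
      1 + 2 * (d + 1/2) ^ k + 2 * (-d - 1) ^ k ∧
    1 + (0:ℝ) ^ k + (0:ℝ) ^ k + (d - 0 - 0) ^ k + (-d - 1) ^ k =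
      1 + d ^ k + (-d - 1) ^ k := by
  obtain ⟨hd1, hd2⟩ := hd
  have e1 : (d - x - y) ^ k = -(x + y + -d) ^ k := by
    rw [← hko.neg_pow]; congr 1; ring
  have e2 : (-d - 1) ^ k = -(2 * (d + 1/2) + -d) ^ k := by
    rw [← hko.neg_pow]; congr 1; ring
  have e3 : d ^ k = -(-d) ^ k := by
    rw [← hko.neg_pow]; congr 1; ring
  refine ⟨⟨?_, ?_⟩, ?_, ?_⟩
  · have h1 := aux_shift (2 * (d + 1/2)) (x + y) (-d) (by linarith) (by linarith) (by linarith) k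
    have h2 := add_pow_le (hy0.trans hyx) hy0 k
    have h3 : (x + y) ^ k ≤ (2 * (d + 1/2)) ^ k :=
      pow_le_pow_left₀ (by linarith) (by linarith) k
    rw [e1, e2]
    obtain ⟨n, rfl⟩ := Nat.exists_eq_succ_of_ne_zero hk.ne'
    simp only [Nat.succ_eq_add_one, Nat.add_sub_cancel] at *
    have h4 : (2 * (d + 1/2)) ^ (n + 1) = 2 ^ n * (2 * (d + 1/2) ^ (n + 1)) := by
      rw [mul_pow]; ring
    have h5 : (1 : ℝ) ≤ 2 ^ n := one_le_pow₀ (by norm_num)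
    generalize (2 * (d + 1/2) + -d) ^ (n + 1) = A at *
    generalize (x + y + -d) ^ (n + 1) = B at *
    generalize (2 * (d + 1/2)) ^ (n + 1) = T at *
    generalize (x + y) ^ (n + 1) = S at *
    have h6 : 2 ^ n * (2 * (d + 1/2) ^ (n + 1) - (x ^ (n + 1) + y ^ (n + 1))) ≤ 2 ^ n * (T - S) := by
      nlinarith
    have h7 := le_of_mul_le_mul_left h6 (by positivity)
    linarith
  · rw [e1, e3]
    obtain ⟨n, rfl⟩ := Nat.exists_eq_succ_of_ne_zero hk.ne'
    have h1 := aux_super x y (by linarith) hy0 n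
    have h2 := aux_super (x + y) (-d) (by linarith) (by linarith) n
    simp only [Nat.succ_eq_add_one] at *
    linarith
  · have : d - (d + 1/2) - (d + 1/2) = -d - 1 := by ring
    rw [this]; ring
  · simp [hk.ne']
end

section
/- Let d ∈ [−1/2, −3/4 + (√5)/4] and let (x,y) lie in the triangle OBJ. Then s₃(x,y,d) ≥ 0. -/
theorem stmt_10 (d : ℝ) (hd : d ∈ Set.Icc (-1/2 : ℝ) (-3/4 + Real.sqrt 5 / 4))
    (x y : ℝ) (hy0 : 0 ≤ y) (hyx : y ≤ x) (hxy : y ≤ -x + 2*d + 1) :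
    0 ≤ 1 + x ^ 3 + y ^ 3 + (d - x - y) ^ 3 + (-d - 1) ^ 3 := by
  obtain ⟨h1, h2⟩ := hd
  have h5 : Real.sqrt 5 ^ 2 = 5 := Real.sq_sqrt (by norm_num)
  have h50 : 0 ≤ Real.sqrt 5 := Real.sqrt_nonneg 5
  have hq : d ^ 2 + 3 / 2 * d + 1 / 4 ≤ 0 := by
    nlinarith [mul_nonneg (by linarith : 0 ≤ d + 3/4 + Real.sqrt 5 / 4)
      (by linarith : 0 ≤ -3/4 + Real.sqrt 5 / 4 - d)]
  have hd0 : d ≤ 0 := by nlinarith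
  obtain ⟨s, hs⟩ : ∃ s, s = x + y := ⟨_, rfl⟩
  have hs0 : 0 ≤ s := by linarith
  have hA : 0 ≤ 3 / 4 * (s * (x - y) ^ 2) := by positivity
  obtain ⟨e, he⟩ : ∃ e, e = -d := ⟨_, rfl⟩
  have he0 : 0 ≤ e := by linarith
  obtain ⟨S, hS⟩ : ∃ S, S = 2 * d + 1 := ⟨_, rfl⟩
  have hS0 : 0 ≤ S := by linarith
  have hB : 0 ≤ (S - s) * (3 / 4 * (S ^ 2 + S * s + s ^ 2) + 3 * e * (S + s) + 3 * e ^ 2) :=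
    mul_nonneg (by linarith) (by positivity)
  have key : 1 + x ^ 3 + y ^ 3 + (d - x - y) ^ 3 + (-d - 1) ^ 3
      = 3 / 4 * (s * (x - y) ^ 2)
        + (S - s) * (3 / 4 * (S ^ 2 + S * s + s ^ 2) + 3 * e * (S + s) + 3 * e ^ 2)
        - 3 * (d ^ 2 + 3 / 2 * d + 1 / 4) := by
    subst hs he hS
    ring
  rw [key]
  linarith
end

section
/- Let d ∈ [−1/2, 0) and let (x,y) lie in the triangle OBJ. Then the quantity under the square root in h(x) is nonnegative, h(x) ≥ 0, and s₃(x,y,d) ≥ 0 if and only if y ≤ h(x). -/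
theorem stmt_11 (d : ℝ) (hd : d ∈ Set.Ico (-1/2 : ℝ) 0) (x y : ℝ)
    (hy0 : 0 ≤ y) (hyx : y ≤ x) (hxy : y ≤ -x + 2*d + 1) :
    0 ≤ (x^3 + d*x^2 - d^2*x - 4*d - 4*d^2 - d^3) / (x - d) ∧
    0 ≤ -(x - d)/2 + Real.sqrt ((x^3 + d*x^2 - d^2*x - 4*d - 4*d^2 - d^3) / (x - d)) / 2 ∧
    (0 ≤ 1 + x^3 + y^3 + (d - x - y)^3 + (-d - 1)^3 ↔
      y ≤ -(x - d)/2 +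
        Real.sqrt ((x^3 + d*x^2 - d^2*x - 4*d - 4*d^2 - d^3) / (x - d)) / 2) := by
  obtain ⟨h1, h2⟩ := hd
  have hx0 : 0 ≤ x := hy0.trans hyx
  have hx1 : x ≤ 2*d + 1 := by linarith
  have ht : 0 < x - d := by linarith
  have hA : x * (x - d) ≤ (2*d+1) * (d+1) :=
    mul_le_mul hx1 (by linarith) ht.le (by linarith)
  have hB : (2*d+1) * (d+1) ≤ 1 + d := by nlinarith
  have hC : 0 ≤ (-d) * (1 + d - x * (x - d)) :=
    mul_nonneg (by linarith) (by linarith)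
  have hN : (x - d)^2 ≤ (x^3 + d*x^2 - d^2*x - 4*d - 4*d^2 - d^3) / (x - d) := by
    rw [le_div_iff₀ ht]
    nlinarith
  have key : (0 ≤ 1 + x^3 + y^3 + (d - x - y)^3 + (-d - 1)^3) ↔
      (2*y + (x - d))^2 ≤ (x^3 + d*x^2 - d^2*x - 4*d - 4*d^2 - d^3) / (x - d) := by
    rw [le_div_iff₀ ht]
    constructor <;> intro h <;> linarith
  refine ⟨(sq_nonneg _).trans hN, ?_, ?_⟩
  · have := Real.le_sqrt_of_sq_le hN
    linarith
  · rw [key, ← Real.le_sqrt' (by linarith)]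
    constructor <;> intro h <;> linarith
end

section
/- Let d ∈ [−3/4 + (√5)/4, 0). Then the cubic polynomial h₄(x) = 8x³ − 16dx² + 8d²x + 4d + 4d² has exactly one real root, and this root lies in the interval (0, d + 1/2]; moreover, for every x ∈ [0, 2d+1], one has h(x) ≤ x if and only if h₄(x) ≥ 0. -/
theorem stmt_14 (d : ℝ) (hd : d ∈ Set.Ico (-3/4 + Real.sqrt 5 / 4) (0:ℝ)) :
    (∃ r : ℝ, (8*r^3 - 16*d*r^2 + 8*d^2*r + 4*d + 4*d^2 = 0) ∧
      0 < r ∧ r ≤ d + 1/2 ∧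
      ∀ s : ℝ, 8*s^3 - 16*d*s^2 + 8*d^2*s + 4*d + 4*d^2 = 0 → s = r) ∧
    ∀ x ∈ Set.Icc (0:ℝ) (2*d + 1),
      (-(x - d)/2 + Real.sqrt ((x^3 + d*x^2 - d^2*x - 4*d - 4*d^2 - d^3) / (x - d)) / 2
          ≤ x ↔ 0 ≤ 8*x^3 - 16*d*x^2 + 8*d^2*x + 4*d + 4*d^2) := by
  obtain ⟨h1, h0⟩ := hd
  have h5 : (2.2:ℝ) ≤ Real.sqrt 5 := Real.le_sqrt_of_sq_le (by norm_num)
  have h5s : Real.sqrt 5 ^ 2 = 5 := Real.sq_sqrt (by norm_num)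
  have hd2 : -0.2 ≤ d := by norm_num at h5 ⊢; linarith
  have hneg : d * (1 + d) < 0 := mul_neg_of_neg_of_pos h0 (by norm_num at hd2; linarith)
  have hq : 0 ≤ 4*d^2 + 6*d + 1 := by
    have : Real.sqrt 5 ≤ 4*d+3 := by linarith
    have := pow_le_pow_left₀ (Real.sqrt_nonneg 5) this 2
    nlinarith
  have hpos : ∀ s : ℝ, 8*s^3 - 16*d*s^2 + 8*d^2*s + 4*d + 4*d^2 = 0 → 0 < s := by
    intro s hs
    by_contra hc
    push Not at hc
    have : s * (s-d)^2 ≤ 0 := mul_nonpos_of_nonpos_of_nonneg hc (sq_nonneg _)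
    nlinarith
  have hmono : ∀ s t : ℝ, 0 < s → s < t → s * (s-d)^2 < t * (t-d)^2 := by
    intro s t hs hst
    have : (s-d)^2 < (t-d)^2 := pow_lt_pow_left₀ (by linarith) (by linarith) (by norm_num)
    exact mul_lt_mul'' hst this hs.le (sq_nonneg _)
  constructor
  · have hc : ContinuousOn (fun r : ℝ => 8*r^3 - 16*d*r^2 + 8*d^2*r + 4*d + 4*d^2)
        (Set.Icc 0 (d+1/2)) := by fun_prop
    have hle : (0:ℝ) ≤ d + 1/2 := by norm_num at hd2 ⊢; linarith
    obtain ⟨r, hr, hr0⟩ := intermediate_value_Icc hle hc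
      (show (0:ℝ) ∈ Set.Icc _ _ from ⟨by nlinarith, by nlinarith⟩)
    have hr0 : 8*r^3 - 16*d*r^2 + 8*d^2*r + 4*d + 4*d^2 = 0 := hr0
    refine ⟨r, hr0, hpos r hr0, hr.2, fun s hs => ?_⟩
    rcases lt_trichotomy s r with h | h | h
    · have := hmono s r (hpos s hs) h
      nlinarith
    · exact h
    · have := hmono r s (hpos r hr0) h
      nlinarith
  · intro x hx
    have hx0 := hx.1
    have hxd : 0 < x - d := by linarith
    have e : ∀ q : ℝ, (-(x - d)/2 + q / 2 ≤ x ↔ q ≤ 3*x - d) := fun q =>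
      ⟨fun h => by linarith, fun h => by linarith⟩
    rw [e, Real.sqrt_le_iff, div_le_iff₀ hxd]
    constructor
    · rintro ⟨_, h⟩
      linarith
    · intro h
      exact ⟨by linarith, by linarith⟩
end

section
/- Let d ∈ [−3/4 + (√5)/4, 0). Then 4d² + 6d + 1 ≥ 0, so g(d) = √((4d² + 6d + 1)/(4(2d+1))) is real; moreover the roots p₁(d) = d + 1/2 + g(d) and p₂(d) = d + 1/2 − g(d) of the quadratic −4(2d+1)x² + 4(2d+1)²x − 8d²(d+1) satisfy p₂(d) ≤ d + 1/2 ≤ p₁(d) ≤ 2d + 1, and h(p₁(d)) = −p₁(d) + 2d + 1 = d + 1/2 − g(d). -/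
theorem stmt_16 (d : ℝ) (hd : d ∈ Set.Ico (-3/4 + Real.sqrt 5 / 4) (0:ℝ)) :
    0 ≤ 4*d^2 + 6*d + 1 ∧
    (let g := Real.sqrt ((4*d^2 + 6*d + 1) / (4*(2*d + 1)));
     let p₁ := d + 1/2 + g;
     let p₂ := d + 1/2 - g;
     -4*(2*d + 1)*p₁^2 + 4*(2*d + 1)^2*p₁ - 8*d^2*(d + 1) = 0 ∧
     -4*(2*d + 1)*p₂^2 + 4*(2*d + 1)^2*p₂ - 8*d^2*(d + 1) = 0 ∧
     p₂ ≤ d + 1/2 ∧ d + 1/2 ≤ p₁ ∧ p₁ ≤ 2*d + 1 ∧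
     -(p₁ - d)/2 +
         Real.sqrt ((p₁^3 + d*p₁^2 - d^2*p₁ - 4*d - 4*d^2 - d^3) / (p₁ - d)) / 2 =
       -p₁ + 2*d + 1 ∧
     -p₁ + 2*d + 1 = d + 1/2 - g) := by
  obtain ⟨h1, h2⟩ := hd
  have h5 : (2:ℝ) < Real.sqrt 5 := Real.lt_sqrt_of_sq_lt (by norm_num)
  have h55 : Real.sqrt 5 ^ 2 = 5 := Real.sq_sqrt (by norm_num)
  have hq : 0 ≤ 4*d^2 + 6*d + 1 := by nlinarith
  have hpos : 0 < 2*d + 1 := by linarith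
  refine ⟨hq, ?_⟩
  intro g p₁ p₂
  have hg0 : 0 ≤ g := Real.sqrt_nonneg _
  have hg2 : g^2 = (4*d^2 + 6*d + 1) / (4*(2*d + 1)) :=
    Real.sq_sqrt (by positivity)
  have hg : 4*(2*d+1)*g^2 = 4*d^2 + 6*d + 1 := by
    rw [hg2]; field_simp
  have hp1 : p₁ = d + 1/2 + g := rfl
  have hp2 : p₂ = d + 1/2 - g := rfl
  clear_value p₁ p₂ g
  have hr : -4*(2*d + 1)*p₁^2 + 4*(2*d + 1)^2*p₁ - 8*d^2*(d + 1) = 0 := by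
    rw [hp1]; linear_combination -hg
  have hgle : g ≤ d + 1/2 := by
    have h : (2*d+1)*g^2 ≤ (2*d+1)*(d+1/2)^2 := by
      nlinarith [mul_nonneg (sq_nonneg d) (by linarith : 0 ≤ d + 1)]
    have h' := le_of_mul_le_mul_left h hpos
    exact (fun a b => abs_le_of_sq_le_sq' a b |>.2) h' (by linarith)
  refine ⟨hr, ?_, by linarith, by linarith, by linarith, ?_, by linarith⟩
  · rw [hp2]; linear_combination -hg
  · have hpd : 0 < p₁ - d := by linarith
    have e : (p₁^3 + d*p₁^2 - d^2*p₁ - 4*d - 4*d^2 - d^3) / (p₁ - d) = (3*d + 2 - p₁)^2 := by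
      rw [div_eq_iff hpd.ne']; linear_combination -hr
    rw [e, Real.sqrt_sq (by linarith)]; ring
end

section
/- Let d ∈ (−1/2, 0] and let (x,y) lie in the triangle OBJ with y > 0. Then (x − d)(x + y) < d + 1, so that u = √((−x² − xy + dx + dy + d + 1)/2) satisfies u > 0; and if in addition s₃(x,y,d) ≥ 0, then every entry of the matrix B(x,y) is nonnegative, where B(x,y) is 1/(2u²) times the 5×5 real symmetric matrix with rows (0, 0, 2u³, 0, 2u³), (0, 0, 0, (d+1)y, v), (2u³, 0, 0, v, s₃/3), (0, (d+1)y, v, 0, 0), (2u³, v, s₃/3, 0, 0), with v = √((x+y)(x+1)(x−d)(x−d−1)(x+y+1)(x+y−d−1)) and s₃ = s₃(x,y,d). -/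
open Matrix

theorem stmt_19 (d x y : ℝ) (hd : d ∈ Set.Ioc (-1/2 : ℝ) 0)
    (hy0 : 0 < y) (hyx : y ≤ x) (hxy : y ≤ -x + 2*d + 1) :
    (x - d)*(x + y) < d + 1 ∧
    (let s₃ := 1 + x^3 + y^3 + (d - x - y)^3 + (-d - 1)^3;
     let u := Real.sqrt ((-x^2 - x*y + d*x + d*y + d + 1)/2);
     let v := Real.sqrt ((x + y)*(x + 1)*(x - d)*(x - d - 1)*(x + y + 1)*(x + y - d - 1));
     let B : Matrix (Fin 5) (Fin 5) ℝ := (1/(2*u^2)) •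
       !![0,      0,        2*u^3, 0,        2*u^3;
          0,      0,        0,     (d + 1)*y, v;
          2*u^3,  0,        0,     v,        s₃/3;
          0,      (d + 1)*y, v,    0,        0;
          2*u^3,  v,        s₃/3,  0,        0];
     0 < u ∧ (0 ≤ s₃ → ∀ i j, 0 ≤ B i j)) := by
  obtain ⟨hd1, hd0⟩ := hd
  have h : (x - d)*(x + y) < d + 1 := by
    nlinarith [mul_nonneg (show (0:ℝ) ≤ x - d by linarith) (show (0:ℝ) ≤ 1 - (x + y) by linarith)]
  refine ⟨h, ?_⟩
  intro s₃ u v B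
  have hu : 0 < u := Real.sqrt_pos.mpr (by nlinarith)
  refine ⟨hu, ?_⟩
  intro hs i j
  have hv : 0 ≤ v := Real.sqrt_nonneg _
  have hu3 : 0 ≤ 2*u^3 := by positivity
  have hdy : 0 ≤ (d + 1)*y := mul_nonneg (by linarith) hy0.le
  have hs3 : 0 ≤ s₃/3 := by linarith
  have hc : 0 ≤ 1/(2*u^2) := by positivity
  clear_value s₃ u v
  refine mul_nonneg hc ?_
  fin_cases i <;> fin_cases j <;> first | exact le_refl (0:ℝ) | exact hu3 | exact hdy | exact hv | exact hs3
end
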